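/- Let 𝒫 = (P, μ, σ) be an n-dimensional system. For every T > 0 there exists a unique u ∈ ℳ^{exp,1}(P) minimizing F_𝒫(T,·) on ℳ^{exp,1}(P) (and this u lies in ℳ^{exp,n/(n−1)}(P)). For T = 0 there exists a unique u ∈ ℳ^{exp,n/(n−1)}(P) such that u minimizes U_𝒫 on ℳ^{exp,1}(P) and S_𝒫(u) = sup{ S_𝒫(u') : u' ∈ ℳ^{exp,1}(P), U_𝒫(u') = inf_{ℳ^{exp,1}(P)} U_𝒫 }. -/

import Mathlib

open MeasureTheory Filter Topology
open scoped ENNReal NNReal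

noncomputable section

abbrev Euc (n : ℕ) := EuclideanSpace ℝ (Fin n)

/-- A `[0,∞]`-valued function on a set `K ⊆ ℝⁿ` is convex if
`u((1−t)x+ty) ≤ (1−t)u(x)+t·u(y)` in `[0,∞]` for all `x, y ∈ K` and `t ∈ [0,1]`. -/
def ConvexFnOn {n : ℕ} (K : Set (Euc n)) (u : Euc n → ℝ≥0∞) : Prop :=
  ∀ ⦃x⦄, x ∈ K → ∀ ⦃y⦄, y ∈ K → ∀ ⦃t : ℝ⦄, 0 ≤ t → t ≤ 1 →
    u ((1 - t) • x + t • y) ≤ ENNReal.ofReal (1 - t) * u x + ENNReal.ofReal t * u y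

/-- A polytope: a compact set with nonempty interior which is a finite
intersection of closed half-spaces (cut out by nonzero affine functions). -/
def IsPolytope {n : ℕ} (P : Set (Euc n)) : Prop :=
  IsCompact P ∧ (interior P).Nonempty ∧
    ∃ (m : ℕ) (L : Fin m → (Euc n →ᵃ[ℝ] ℝ)),
      (∀ k, L k ≠ 0) ∧ P = ⋂ k, {x | 0 ≤ L k x}

/-- `F` is a face of `P`: the intersection of `P` with the zero locus of a
nonzero affine function that is nonnegative on `P`. -/
def IsFaceOf {n : ℕ} (P F : Set (Euc n)) : Prop :=
  ∃ ℓ : Euc n →ᵃ[ℝ] ℝ, ℓ ≠ 0 ∧ (∀ y ∈ P, 0 ≤ ℓ y) ∧ F = {y ∈ P | ℓ y = 0}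

/-- A facet: a face spanning an affine subspace of dimension `n − 1`. -/
def IsFacetOf {n : ℕ} (P F : Set (Euc n)) : Prop :=
  IsFaceOf P F ∧ Module.finrank ℝ (vectorSpan ℝ F) + 1 = n

/-- A simple polytope: every vertex lies on exactly `n` facets. -/
def IsSimplePolytope {n : ℕ} (P : Set (Euc n)) : Prop :=
  IsPolytope P ∧ ∀ v : Euc n, IsFaceOf P {v} →
    {F : Set (Euc n) | IsFacetOf P F ∧ v ∈ F}.ncard = n

/-- An `n`-dimensional system `𝒫 = (P, μ, σ)`: a simple polytope `P ⊆ ℝⁿ`, a flat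
measure `μ` on `P` (a positive constant multiple of Lebesgue measure restricted
to `P`), and a flat measure `σ` on `∂P` (supported on the boundary and, on each
facet, a positive constant multiple of `(n−1)`-dimensional Hausdorff measure). -/
structure NSystem (n : ℕ) where
  P : Set (Euc n)
  μ : Measure (Euc n)
  σ : Measure (Euc n)
  simple : IsSimplePolytope P
  flat : ∃ c : ℝ, 0 < c ∧ μ = ENNReal.ofReal c • volume.restrict P
  bdry_supp : σ (frontier P)ᶜ = 0
  flat_bdry : ∀ F : Set (Euc n), IsFacetOf P F →
    ∃ c : ℝ, 0 < c ∧ σ.restrict F =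
      ENNReal.ofReal c • (Measure.hausdorffMeasure ((n : ℝ) - 1)).restrict F

/-- `y log y`, computed via the real value of `y ∈ [0,∞]`. -/
def xlogx (y : ℝ≥0∞) : ℝ := y.toReal * Real.log y.toReal

/-- `∫_A u log u dμ ∈ (−∞, ∞]`, as an extended real number. -/
def entOn {n : ℕ} (μ : Measure (Euc n)) (A : Set (Euc n)) (u : Euc n → ℝ≥0∞) : EReal :=
  ((∫⁻ x in A, ENNReal.ofReal (xlogx (u x)) ∂μ : ℝ≥0∞) : EReal)
    - ((∫⁻ x in A, ENNReal.ofReal (-(xlogx (u x))) ∂μ : ℝ≥0∞) : EReal)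

/-- `u : P → (0,∞]` is log-convex: `u((1−t)x+ty) ≤ u(x)^{1−t} u(y)^t`. -/
def LogConvexOn {n : ℕ} (P : Set (Euc n)) (u : Euc n → ℝ≥0∞) : Prop :=
  ∀ ⦃x⦄, x ∈ P → ∀ ⦃y⦄, y ∈ P → ∀ ⦃t : ℝ⦄, 0 ≤ t → t ≤ 1 →
    u ((1 - t) • x + t • y) ≤ u x ^ (1 - t) * u y ^ t

/-- `ℳ^{exp,p}(P)`: lower semi-continuous log-convex `u : P → (0,∞]` with
`∫_P u dμ = μ(P)` and `∫_P u^p dμ < ∞`. -/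
def MExp {n : ℕ} (S : NSystem n) (p : ℝ) : Set (Euc n → ℝ≥0∞) :=
  {u | LowerSemicontinuousOn u S.P ∧ (∀ x ∈ S.P, 0 < u x) ∧ LogConvexOn S.P u ∧
    (∫⁻ x in S.P, u x ∂S.μ) = S.μ S.P ∧ (∫⁻ x in S.P, u x ^ p ∂S.μ) < ⊤}

/-- The nonequilibrium entropy `S_𝒫(u) = −(1/μ(P)) ∫_P u log u dμ ∈ [−∞, 0]`. -/
def Spf {n : ℕ} (S : NSystem n) (u : Euc n → ℝ≥0∞) : EReal :=
  (((S.μ S.P).toReal⁻¹ : ℝ) : EReal) *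
    (((∫⁻ x in S.P, ENNReal.ofReal (-(xlogx (u x))) ∂S.μ : ℝ≥0∞) : EReal)
      - ((∫⁻ x in S.P, ENNReal.ofReal (xlogx (u x)) ∂S.μ : ℝ≥0∞) : EReal))

/-- The internal μ-energy `U_𝒫(u) = (1/μ(P)) ∫_{∂P} u dσ ∈ (0, ∞]`. -/
def Upf {n : ℕ} (S : NSystem n) (u : Euc n → ℝ≥0∞) : ℝ≥0∞ :=
  (S.μ S.P)⁻¹ * ∫⁻ x in frontier S.P, u x ∂S.σ

/-- The free μ-energy `F_𝒫(T,u) = U_𝒫(u) − T·S_𝒫(u)` if `S_𝒫(u) > −∞`, else `∞`. -/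
def Fpf {n : ℕ} (S : NSystem n) (T : ℝ) (u : Euc n → ℝ≥0∞) : EReal :=
  if Spf S u = ⊥ then ⊤ else (Upf S u : EReal) - (T : EReal) * Spf S u

/-- `u` is the μ-canonical distribution of temperature `T ≥ 0`: for `T > 0` the
minimizer of `F_𝒫(T,·)` on `ℳ^{exp,1}(P)`; for `T = 0` the minimizer of `U_𝒫`
maximizing `S_𝒫` among all minimizers of `U_𝒫`. -/
def IsCanonical {n : ℕ} (S : NSystem n) (T : ℝ) (u : Euc n → ℝ≥0∞) : Prop :=
  u ∈ MExp S 1 ∧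
  (0 < T → ∀ u' ∈ MExp S 1, Fpf S T u ≤ Fpf S T u') ∧
  (T = 0 → (∀ u' ∈ MExp S 1, Upf S u ≤ Upf S u') ∧
    ∀ u' ∈ MExp S 1, (∀ u'' ∈ MExp S 1, Upf S u' ≤ Upf S u'') → Spf S u' ≤ Spf S u)


/-- Lower semicontinuous positive log-convex functions. -/
def LC {n : ℕ} (P : Set (Euc n)) (u : Euc n → ℝ≥0∞) : Prop :=
  LowerSemicontinuousOn u P ∧ (∀ x ∈ P, 0 < u x) ∧ LogConvexOn P u

lemma geom_le_arith (a b : ℝ≥0∞) {t : ℝ} (h0 : 0 ≤ t) (h1 : t ≤ 1) :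
    a ^ (1 - t) * b ^ t ≤ ENNReal.ofReal (1 - t) * a + ENNReal.ofReal t * b := by
  rcases h0.eq_or_lt with rfl | h0
  · simp
  rcases h1.eq_or_lt with rfl | h1
  · simp
  have h1' : 0 < 1 - t := by linarith
  by_cases ha : a = ⊤
  · subst ha
    simp [ENNReal.mul_top, h1]
  by_cases hb : b = ⊤
  · subst hb
    simp [ENNReal.mul_top, h0]
  lift a to ℝ≥0 using ha
  lift b to ℝ≥0 using hb
  have := NNReal.geom_mean_le_arith_mean2_weighted ⟨1 - t, h1'.le⟩ ⟨t, h0.le⟩ a b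
    (Subtype.ext (by change (1 - t) + t = 1; ring))
  rw [← ENNReal.coe_rpow_of_nonneg _ h1'.le, ← ENNReal.coe_rpow_of_nonneg _ h0.le,
    ENNReal.ofReal, ENNReal.ofReal]
  rw [← ENNReal.coe_mul, ← ENNReal.coe_mul, ← ENNReal.coe_mul, ← ENNReal.coe_add,
    ENNReal.coe_le_coe]
  rw [Real.toNNReal_of_nonneg h1'.le, Real.toNNReal_of_nonneg h0.le]
  exact this

lemma LogConvexOn.le_arith {n : ℕ} {P : Set (Euc n)} {u : Euc n → ℝ≥0∞} (hu : LogConvexOn P u)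
    {x y : Euc n} (hx : x ∈ P) (hy : y ∈ P) {t : ℝ} (h0 : 0 ≤ t) (h1 : t ≤ 1) :
    u ((1 - t) • x + t • y) ≤ ENNReal.ofReal (1 - t) * u x + ENNReal.ofReal t * u y :=
  (hu hx hy h0 h1).trans (geom_le_arith _ _ h0 h1)

lemma holder_two (a b c d : ℝ≥0∞) {t : ℝ} (h0 : 0 ≤ t) (h1 : t ≤ 1) :
    a ^ (1 - t) * b ^ t + c ^ (1 - t) * d ^ t ≤ (a + c) ^ (1 - t) * (b + d) ^ t := by
  rcases h0.eq_or_lt with rfl | h0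
  · simp
  rcases h1.eq_or_lt with rfl | h1
  · simp
  have h1' : 0 < 1 - t := by linarith
  have hpq : Real.HolderConjugate (1 - t)⁻¹ t⁻¹ := by
    rw [Real.holderConjugate_iff]
    constructor
    · exact (one_lt_inv₀ h1').2 (by linarith)
    · simp
  have := ENNReal.inner_le_Lp_mul_Lq Finset.univ (![a ^ (1-t), c ^ (1-t)]) (![b ^ t, d ^ t]) hpq
  simpa [Fin.sum_univ_two, ← ENNReal.rpow_mul, h1'.ne', h0.ne'] using this

lemma LC.mid {n : ℕ} {P : Set (Euc n)} {u v : Euc n → ℝ≥0∞} (hu : LC P u) (hv : LC P v) :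
    LC P (fun x => 2⁻¹ * (u x + v x)) := by
  refine ⟨?_, ?_, ?_⟩
  · have h := hu.1.add hv.1
    exact (ENNReal.continuous_const_mul (a := 2⁻¹) (by simp)).comp_lowerSemicontinuousOn h
      (fun a b hab => by dsimp only; gcongr)
  · intro x hx
    have := hu.2.1 x hx
    exact ENNReal.mul_pos (by simp) (by simp [this.ne'])
  · intro x hx y hy t h0 h1
    have e : (2⁻¹ : ℝ≥0∞) = 2⁻¹ ^ (1 - t) * 2⁻¹ ^ t := by
      rw [← ENNReal.rpow_add _ _ (by simp) (by simp)]; simp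
    calc 2⁻¹ * (u ((1 - t) • x + t • y) + v ((1 - t) • x + t • y))
        ≤ 2⁻¹ * (u x ^ (1-t) * u y ^ t + v x ^ (1-t) * v y ^ t) := by
          gcongr
          · exact hu.2.2 hx hy h0 h1
          · exact hv.2.2 hx hy h0 h1
      _ ≤ 2⁻¹ * ((u x + v x) ^ (1-t) * (u y + v y) ^ t) := by
          gcongr; exact holder_two _ _ _ _ h0 h1
      _ = _ := by
          beta_reduce
          rw [ENNReal.mul_rpow_of_nonneg _ _ (by linarith : 0 ≤ 1 - t),
            ENNReal.mul_rpow_of_nonneg _ _ h0]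
          conv_lhs => rw [e]
          ring

/-- Two-point log-convexity of a limsup at points of finiteness. -/
lemma limsup_logconvex {n : ℕ} {P : Set (Euc n)} {w : ℕ → Euc n → ℝ≥0∞}
    (hw : ∀ k, LogConvexOn P (w k)) {x y : Euc n} (hx : x ∈ P) (hy : y ∈ P)
    (fx : limsup (fun k => w k x) atTop ≠ ⊤) (fy : limsup (fun k => w k y) atTop ≠ ⊤)
    {t : ℝ} (h0 : 0 ≤ t) (h1 : t ≤ 1) :
    limsup (fun k => w k ((1 - t) • x + t • y)) atTop ≤
      limsup (fun k => w k x) atTop ^ (1 - t) * limsup (fun k => w k y) atTop ^ t := by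
  have h1' : 0 ≤ 1 - t := by linarith
  have e : ∀ (s : ℝ) (_ : 0 ≤ s) (f : ℕ → ℝ≥0∞),
      (limsup f atTop) ^ s = limsup (fun k => f k ^ s) atTop := by
    intro s hs f
    exact (ENNReal.monotone_rpow_of_nonneg hs).map_limsup_of_continuousAt f
      (ENNReal.continuous_rpow_const.continuousAt)
  have h := ENNReal.limsup_mul_le' (f := atTop) (u := fun k => w k x ^ (1 - t))
    (v := fun k => w k y ^ t) (Or.inr ?_) (Or.inl ?_)
  · rw [e _ h1', e _ h0]
    refine le_trans (limsup_le_limsup (Eventually.of_forall fun k => ?_)) h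
    exact hw k hx hy h0 h1
  · rw [← e _ h0]; exact ENNReal.rpow_ne_top_of_nonneg h0 fy
  · rw [← e _ h1']; exact ENNReal.rpow_ne_top_of_nonneg h1' fx

lemma limsup_finite {n : ℕ} {P : Set (Euc n)} {w : ℕ → Euc n → ℝ≥0∞}
    (hw : ∀ k, LogConvexOn P (w k))
    (hfin : ∀ᵐ x ∂(volume.restrict P), limsup (fun k => w k x) atTop ≠ ⊤) 
    {x : Euc n} (hx : x ∈ interior P) : limsup (fun k => w k x) atTop ≠ ⊤ := by
  obtain ⟨r, hr, hB⟩ := Metric.isOpen_iff.1 isOpen_interior x hx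
  have hBP : Metric.ball x r ⊆ P := hB.trans interior_subset
  have h1 : ∀ᵐ y ∂(volume.restrict (Metric.ball x r)), limsup (fun k => w k y) atTop ≠ ⊤ :=
    ae_restrict_of_ae_restrict_of_subset hBP hfin
  rw [ae_restrict_iff' Metric.isOpen_ball.measurableSet] at h1
  have mp : MeasurePreserving (fun y : Euc n => (x + x) - y) volume volume :=
    Measure.measurePreserving_sub_left volume (x + x)
  have h2 := mp.quasiMeasurePreserving.ae h1
  have h3 : ∀ᵐ y ∂(volume.restrict (Metric.ball x r)), limsup (fun k => w k y) atTop ≠ ⊤ ∧ 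
     limsup (fun k => w k (x + x - y)) atTop ≠ ⊤ ∧ y ∈ P ∧ x + x - y ∈ P := by
    rw [ae_restrict_iff' Metric.isOpen_ball.measurableSet]
    filter_upwards [h1, h2] with y hy1 hy2 hy
    have hy' : x + x - y ∈ Metric.ball x r := by
      rw [Metric.mem_ball, dist_eq_norm] at hy ⊢
      have e1 : x + x - y - x = -(y - x) := by abel
      rw [e1, norm_neg]; exact hy
    exact ⟨hy1 hy, hy2 hy', hBP hy, hBP hy'⟩
  have : NeBot (ae (volume.restrict (Metric.ball x r))) := by
    rw [ae_neBot, Ne, Measure.restrict_eq_zero]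
    exact (Metric.measure_ball_pos volume x hr).ne'
  obtain ⟨y, hy1, hy2, hy3, hy4⟩ := h3.exists
  have h := limsup_logconvex hw hy3 hy4 hy1 hy2 (t := 1/2) (by norm_num) (by norm_num)
  have e : ((1:ℝ) - 1/2) • y + (1/2 : ℝ) • (x + x - y) = x := by
    module
  rw [e] at h
  refine ne_top_of_le_ne_top ?_ h
  exact ENNReal.mul_ne_top (ENNReal.rpow_ne_top_of_nonneg (by norm_num) hy1)
    (ENNReal.rpow_ne_top_of_nonneg (by norm_num) hy2)

lemma cont_of_logconvex {n : ℕ} {O : Set (Euc n)} (hO : IsOpen O) (hc : Convex ℝ O)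
    {g : Euc n → ℝ≥0∞} (hg : LogConvexOn O g) (hf : ∀ x ∈ O, g x ≠ ⊤) : ContinuousOn g O := by
  have hcv : ConvexOn ℝ O (fun x => (g x).toReal) := by
    refine ⟨hc, fun x hx y hy a b ha hb hab => ?_⟩
    have h := hg.le_arith hx hy hb (by linarith : b ≤ 1)
    have ea : 1 - b = a := by linarith
    rw [ea] at h
    have h2 := ENNReal.toReal_mono (ENNReal.add_ne_top.2
      ⟨ENNReal.mul_ne_top ENNReal.ofReal_ne_top (hf x hx),
      ENNReal.mul_ne_top ENNReal.ofReal_ne_top (hf y hy)⟩) h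
    rw [ENNReal.toReal_add (ENNReal.mul_ne_top ENNReal.ofReal_ne_top (hf x hx))
      (ENNReal.mul_ne_top ENNReal.ofReal_ne_top (hf y hy)), ENNReal.toReal_mul,
      ENNReal.toReal_mul, ENNReal.toReal_ofReal ha, ENNReal.toReal_ofReal hb] at h2
    simpa using h2
  have hcont := hcv.continuousOn hO
  have := ENNReal.continuous_ofReal.comp_continuousOn hcont
  refine this.congr fun x hx => ?_
  simp [ENNReal.ofReal_toReal (hf x hx)]

/-- a log-convex finite function on an open convex set vanishing at a point vanishes. -/
lemma pos_of_logconvex {n : ℕ} {O : Set (Euc n)} (hO : IsOpen O)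
    {g : Euc n → ℝ≥0∞} (hg : LogConvexOn O g) {z : Euc n} (hz : z ∈ O)
    (h0 : g z = 0) {x : Euc n} (hx : x ∈ O) : g x = 0 := by
  have ht : Tendsto (fun s : ℝ => x + s • (x - z)) (𝓝[>] 0) (𝓝 (x + (0:ℝ) • (x - z))) := by
    apply Tendsto.mono_left _ nhdsWithin_le_nhds
    apply Continuous.tendsto
    fun_prop
  simp only [zero_smul, add_zero] at ht
  obtain ⟨s, hs, hs0⟩ := ((ht.eventually (hO.mem_nhds hx)).and self_mem_nhdsWithin).exists
  have hs0 : 0 < s := hs0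
  have h1s : 0 < 1 + s := by linarith
  have h := hg hz hs (t := 1 / (1 + s)) (by positivity) (by
    rw [div_le_one h1s]; linarith)
  have e : (1 - 1 / (1 + s)) • z + (1 / (1 + s)) • (x + s • (x - z)) = x := by
    have : 1 - 1 / (1 + s) = (1 / (1+s)) * s := by field_simp; ring
    rw [this]
    have h2 : x = (1 / (1+s)) • ((1 + s) • x) := by
      rw [smul_smul, one_div, inv_mul_cancel₀ h1s.ne', one_smul]
    conv_rhs => rw [h2]
    module
  rw [e, h0, ENNReal.zero_rpow_of_pos, zero_mul] at h
  · simpa using h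
  · rw [sub_pos, div_lt_one h1s]; linarith

/-- lsc extension from the interior. -/
lemma exists_lsc_ext {n : ℕ} {P : Set (Euc n)} (hcv : Convex ℝ P) (hcl : IsClosed P)
    (hne : (interior P).Nonempty) {g : Euc n → ℝ≥0∞} (hg : LogConvexOn (interior P) g)
    (hf : ∀ x ∈ interior P, g x ≠ ⊤) (hp : ∀ x ∈ interior P, g x ≠ 0) :
    ∃ u, LC P u ∧ ∀ x ∈ interior P, u x = g x := by
  have hcont := cont_of_logconvex isOpen_interior hcv.interior hg hf
  have hNB : ∀ x ∈ P, NeBot (𝓝[interior P] x) := by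
    intro x hx
    rw [← mem_closure_iff_nhdsWithin_neBot,
      hcv.closure_interior_eq_closure_of_nonempty_interior hne, hcl.closure_eq]
    exact hx
  let u : Euc n → ℝ≥0∞ := fun x => liminf g (𝓝[interior P] x)
  have hug : ∀ x ∈ interior P, u x = g x := by
    intro x hx
    have := hNB x (interior_subset hx)
    exact (hcont x hx).liminf_eq
  have hpos : ∀ x ∈ P, 0 < u x := by
    intro x hx
    have := hNB x hx
    obtain ⟨q, hq⟩ := hne
    -- bound near q
    have hqc : ContinuousAt g q := (hcont q hq).continuousAt (isOpen_interior.mem_nhds hq)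
    obtain ⟨C, hC1, hC2⟩ := exists_between (lt_top_iff_ne_top.2 (hf q hq))
    have hN : {y | y ∈ interior P ∧ g y < C} ∈ 𝓝 q :=
      inter_mem (isOpen_interior.mem_nhds hq) (hqc.eventually (gt_mem_nhds hC1))
    -- choose s
    have ht : Tendsto (fun a : ℝ × Euc n => q + a.1 • (q - a.2)) (𝓝 ((0:ℝ), x)) (𝓝 q) := by
      have : Continuous (fun a : ℝ × Euc n => q + a.1 • (q - a.2)) := by fun_prop
      simpa using this.tendsto ((0:ℝ), x)
    have hev := ht.eventually hN
    rw [nhds_prod_eq] at hev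
    obtain ⟨p1, h1, p2, h2, h12⟩ := eventually_prod_iff.1 hev
    obtain ⟨s, hs, hs0⟩ := ((h1.filter_mono nhdsWithin_le_nhds :
      ∀ᶠ s in 𝓝[>] (0:ℝ), p1 s).and self_mem_nhdsWithin).exists
    have hs0 : 0 < s := hs0
    have h1s : 0 < 1 + s := by linarith
    set a : ℝ := 1 / (1 + s) with ha
    have ha0 : 0 < a := by positivity
    have ha1 : a < 1 := by rw [ha, div_lt_one h1s]; linarith
    have key : ∀ᶠ y in 𝓝[interior P] x, g q ≤ g y ^ (1 - a) * C ^ a := by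
      filter_upwards [h2.filter_mono nhdsWithin_le_nhds, self_mem_nhdsWithin] with y hy hyP
      obtain ⟨hz1, hz2⟩ := h12 hs hy
      have h := hg hyP hz1 ha0.le ha1.le
      have e : (1 - a) • y + a • (q + s • (q - y)) = q := by
        have e1 : 1 - a = a * s := by rw [ha]; field_simp; ring
        rw [e1]
        have h2 : q = a • ((1 + s) • q) := by
          rw [smul_smul, ha, one_div, inv_mul_cancel₀ h1s.ne', one_smul]
        conv_rhs => rw [h2]
        module
      simp only at h
      rw [e] at h
      refine h.trans ?_
      gcongr
    have hgq := hp q hq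
    have hCa : C ^ a ≠ ⊤ := ENNReal.rpow_ne_top_of_nonneg ha0.le hC2.ne
    have hb : 0 < (g q / C ^ a) ^ (1 - a)⁻¹ := by
      apply ENNReal.rpow_pos
      · exact ENNReal.div_pos hgq hCa
      · refine ENNReal.div_ne_top (hf q hq) ?_
        have : C ≠ 0 := (lt_of_le_of_lt zero_le hC1).ne'
        simp [this, hC2.ne]
    refine lt_of_lt_of_le hb ?_
    refine le_liminf_of_le (by isBoundedDefault) ?_
    filter_upwards [key] with y hy
    rw [ENNReal.rpow_inv_le_iff (by linarith)]
    exact ENNReal.div_le_of_le_mul hy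
  refine ⟨u, ⟨?_, hpos, ?_⟩, hug⟩
  · intro x hx a ha
    obtain ⟨b, hab, hb⟩ := exists_between ha
    have h1 : ∀ᶠ y in 𝓝[interior P] x, b < g y := eventually_lt_of_lt_liminf hb
    have h2 : ∀ᶠ y in 𝓝 x, ∀ᶠ z in 𝓝[interior P] y, b < g z := eventually_nhds_nhdsWithin.2 h1
    filter_upwards [h2.filter_mono nhdsWithin_le_nhds] with y hy
    exact lt_of_lt_of_le hab (le_liminf_of_le (by isBoundedDefault) (hy.mono fun z hz => hz.le))
  · intro x hx y hy t h0 h1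
    rcases h0.eq_or_lt with rfl | h0
    · simp
    rcases h1.eq_or_lt with rfl | h1
    · simp
    have h1' : 0 < 1 - t := by linarith
    by_cases hxt : u x = ⊤
    · rw [hxt, ENNReal.top_rpow_of_pos h1', ENNReal.top_mul]
      · exact le_top
      · have := hpos y hy
        simp [this.ne', h0.not_gt]
    by_cases hyt : u y = ⊤
    · rw [hyt, ENNReal.top_rpow_of_pos h0, ENNReal.mul_top]
      · exact le_top
      · have := hpos x hx
        simp [this.ne', h1.le]
    have := hNB x hx
    have := hNB y hy
    have hstep : ∀ a, u x < a → ∀ b, u y < b →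
        u ((1 - t) • x + t • y) ≤ a ^ (1 - t) * b ^ t := by
      intro a ha b hb
      have fa : ∃ᶠ z in 𝓝[interior P] x, g z < a := frequently_lt_of_liminf_lt (by isBoundedDefault) ha
      have fb : ∃ᶠ z in 𝓝[interior P] y, g z < b := frequently_lt_of_liminf_lt (by isBoundedDefault) hb
      by_contra! hlt
      have hev : ∀ᶠ z in 𝓝[interior P] ((1 - t) • x + t • y), a ^ (1 - t) * b ^ t < g z :=
        eventually_lt_of_lt_liminf hlt
      have htd : Tendsto (fun p : Euc n × Euc n => (1 - t) • p.1 + t • p.2)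
          (𝓝[interior P] x ×ˢ 𝓝[interior P] y) (𝓝[interior P] ((1 - t) • x + t • y)) := by
        rw [← nhdsWithin_prod_eq]
        apply tendsto_nhdsWithin_of_tendsto_nhds_of_eventually_within
        · apply Tendsto.mono_left _ nhdsWithin_le_nhds
          have : Continuous (fun p : Euc n × Euc n => (1 - t) • p.1 + t • p.2) := by fun_prop
          exact this.tendsto (x, y)
        · filter_upwards [self_mem_nhdsWithin] with p hp
          exact hcv.interior hp.1 hp.2 h1'.le h0.le (by ring)
      have h3 := htd.eventually hev
      have h4 : ∀ᶠ p in (𝓝[interior P] x ×ˢ 𝓝[interior P] y), p.1 ∈ interior P ∧ p.2 ∈ interior P :=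
        prod_mem_prod self_mem_nhdsWithin self_mem_nhdsWithin
      obtain ⟨p1, q1, p2, q2, h5⟩ := eventually_prod_iff.1 (h3.and h4)
      obtain ⟨z1, hz1, hz1'⟩ := (fa.and_eventually q1).exists
      obtain ⟨z2, hz2, hz2'⟩ := (fb.and_eventually q2).exists
      obtain ⟨h6, h7, h8⟩ := h5 hz1' hz2'
      have h9 := hg h7 h8 h0.le h1.le
      refine absurd (h6.trans_le h9) (not_lt.2 ?_)
      gcongr
    -- pass to the limit
    have hA : Tendsto (fun a : ℝ≥0∞ => a ^ (1 - t)) (𝓝[>] (u x)) (𝓝 (u x ^ (1-t))) :=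
      (ENNReal.continuous_rpow_const.tendsto _).mono_left nhdsWithin_le_nhds
    have hB : Tendsto (fun a : ℝ≥0∞ => a ^ t) (𝓝[>] (u y)) (𝓝 (u y ^ t)) :=
      (ENNReal.continuous_rpow_const.tendsto _).mono_left nhdsWithin_le_nhds
    have nb1 : NeBot (𝓝[>] (u x)) := nhdsGT_neBot_of_exists_gt ⟨⊤, lt_top_iff_ne_top.2 hxt⟩
    have nb2 : NeBot (𝓝[>] (u y)) := nhdsGT_neBot_of_exists_gt ⟨⊤, lt_top_iff_ne_top.2 hyt⟩
    have hAB : Tendsto (fun p : ℝ≥0∞ × ℝ≥0∞ => p.1 ^ (1 - t) * p.2 ^ t)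
        (𝓝[>] (u x) ×ˢ 𝓝[>] (u y)) (𝓝 (u x ^ (1-t) * u y ^ t)) := by
      refine ENNReal.Tendsto.mul (hA.comp tendsto_fst) (Or.inr ?_) (hB.comp tendsto_snd) (Or.inr ?_)
      · exact ENNReal.rpow_ne_top_of_nonneg h0.le hyt
      · exact ENNReal.rpow_ne_top_of_nonneg h1'.le hxt
    refine ge_of_tendsto hAB ?_
    filter_upwards [(prod_mem_prod self_mem_nhdsWithin self_mem_nhdsWithin :
      ∀ᶠ p in (𝓝[>] (u x) ×ˢ 𝓝[>] (u y)), p.1 ∈ Set.Ioi (u x) ∧ p.2 ∈ Set.Ioi (u y))] with p hp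
    exact hstep _ hp.1 _ hp.2

/-- The limit lemma. -/
lemma limit_lemma {n : ℕ} {P : Set (Euc n)} (hcv : Convex ℝ P) (hcl : IsClosed P)
    (hne : (interior P).Nonempty) {w : ℕ → Euc n → ℝ≥0∞} (hw : ∀ k, LogConvexOn P (w k))
    {v : Euc n → ℝ≥0∞}
    (hlim : ∀ᵐ x ∂(volume.restrict P), Tendsto (fun k => w k x) atTop (𝓝 (v x)))
    (hfin : ∀ᵐ x ∂(volume.restrict P), v x ≠ ⊤)
    (hnz : ¬ ∀ᵐ x ∂(volume.restrict P), v x = 0) :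
    ∃ u, LC P u ∧ (∀ x ∈ interior P, Tendsto (fun k => w k x) atTop (𝓝 (u x))) ∧
      (∀ x ∈ interior P, u x ≠ ⊤) ∧ ContinuousOn u (interior P) ∧ u =ᵐ[volume.restrict P] v := by
  let G : (ℕ → ℕ) → Euc n → ℝ≥0∞ := fun φ x => limsup (fun k => w (φ k) x) atTop
  have hae : ∀ᵐ x ∂(volume.restrict P), x ∈ interior P := by
    have h := hcv.addHaar_frontier volume
    rw [ae_restrict_iff' hcl.measurableSet]
    have : ∀ᵐ x : Euc n, x ∉ frontier P := measure_eq_zero_iff_ae_notMem.1 h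
    filter_upwards [this] with x hx hxP
    by_contra hxi
    exact hx ⟨subset_closure hxP, hxi⟩
  have hGv : ∀ φ, Tendsto φ atTop atTop → ∀ᵐ x ∂(volume.restrict P), G φ x = v x := by
    intro φ hφ
    filter_upwards [hlim] with x hx
    exact (hx.comp hφ).limsup_eq
  have hGf : ∀ φ, Tendsto φ atTop atTop → ∀ x ∈ interior P, G φ x ≠ ⊤ := by
    intro φ hφ x hx
    refine limsup_finite (P := P) (w := fun k => w (φ k)) (fun k => hw _) ?_ hx
    filter_upwards [hGv φ hφ, hfin] with y h1 h2
    exact h1.trans_ne h2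
  have hGl : ∀ φ, Tendsto φ atTop atTop → LogConvexOn (interior P) (G φ) := by
    intro φ hφ x hx y hy t h0 h1
    exact limsup_logconvex (P := P) (w := fun k => w (φ k)) (fun k => hw _)
      (interior_subset hx) (interior_subset hy) (hGf φ hφ x hx) (hGf φ hφ y hy) h0 h1
  have hGc : ∀ φ, Tendsto φ atTop atTop → ContinuousOn (G φ) (interior P) := fun φ hφ =>
    cont_of_logconvex isOpen_interior hcv.interior (hGl φ hφ) (hGf φ hφ)
  have hGe : ∀ φ, Tendsto φ atTop atTop → Set.EqOn (G φ) (G id) (interior P) := by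
    intro φ hφ
    refine Measure.eqOn_open_of_ae_eq (μ := volume) ?_ isOpen_interior (hGc φ hφ) (hGc id tendsto_id)
    refine ae_restrict_of_ae_restrict_of_subset interior_subset ?_
    filter_upwards [hGv φ hφ, hGv id tendsto_id] with x h1 h2
    rw [h1, h2]
  have hid : Tendsto (id : ℕ → ℕ) atTop atTop := tendsto_id
  have hpos : ∀ x ∈ interior P, G id x ≠ 0 := by
    intro x hx h0
    apply hnz
    filter_upwards [hae, hGv id hid] with y hy hy2
    rw [← hy2]
    exact pos_of_logconvex isOpen_interior (hGl id hid) hx h0 hy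
  obtain ⟨u, hu, hue⟩ := exists_lsc_ext hcv hcl hne (hGl id hid) (hGf id hid) hpos
  refine ⟨u, hu, ?_, ?_, ?_, ?_⟩
  · intro x hx
    refine tendsto_of_subseq_tendsto fun ns hns => ?_
    obtain ⟨a, -, ms, hms, ha⟩ := (isCompact_univ (X := ℝ≥0∞)).isSeqCompact
      (x := fun k => w (ns k) x) (fun k => Set.mem_univ _)
    refine ⟨ms, ?_⟩
    have h1 := hGe (ns ∘ ms) (hns.comp hms.tendsto_atTop) hx
    have h2 : G (ns ∘ ms) x = a := ha.limsup_eq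
    rw [hue x hx, ← h1, h2]
    exact ha
  · intro x hx; rw [hue x hx]; exact hGf id hid x hx
  · exact (hGc id hid).congr hue
  · filter_upwards [hae, hGv id hid] with x h1 h2
    rw [hue x h1, h2]

lemma tendsto_radial {n : ℕ} (x q : Euc n) :
    Tendsto (fun t : ℝ => (1 - t) • x + t • q) (𝓝[>] 0) (𝓝 x) := by
  have : Continuous (fun t : ℝ => (1 - t) • x + t • q) := by fun_prop
  simpa using (this.tendsto 0).mono_left nhdsWithin_le_nhds

lemma radial_mem {n : ℕ} {P : Set (Euc n)} (hcv : Convex ℝ P) {x q : Euc n} (hx : x ∈ P)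
    (hq : q ∈ interior P) {t : ℝ} (h0 : 0 < t) (h1 : t ≤ 1) :
    (1 - t) • x + t • q ∈ interior P := by
  exact hcv.combo_self_interior_mem_interior hx hq (by linarith) h0 (by ring)

lemma LC.le_liminf_radial {n : ℕ} {P : Set (Euc n)} (hcv : Convex ℝ P) {u : Euc n → ℝ≥0∞}
    (hu : LC P u) {x q : Euc n} (hx : x ∈ P) (hq : q ∈ interior P) {l : Filter ℝ}
    (hl : l ≤ 𝓝[>] 0) :
    u x ≤ liminf (fun t : ℝ => u ((1 - t) • x + t • q)) l := by
  refine le_of_forall_lt fun a ha => ?_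
  obtain ⟨b, hab, hb⟩ := exists_between ha
  refine lt_of_lt_of_le hab (le_liminf_of_le (by isBoundedDefault) ?_)
  apply Eventually.filter_mono hl
  have h1 : Tendsto (fun t : ℝ => (1 - t) • x + t • q) (𝓝[>] 0) (𝓝[P] x) := by
    apply tendsto_nhdsWithin_of_tendsto_nhds_of_eventually_within _ (tendsto_radial x q)
    filter_upwards [Ioc_mem_nhdsGT (zero_lt_one (α := ℝ))] with t ht
    exact interior_subset (radial_mem hcv hx hq ht.1 ht.2)
  filter_upwards [h1.eventually (hu.1 x hx b hb)] with t ht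
  exact ht.le

lemma LC.eq_liminf_radial {n : ℕ} {P : Set (Euc n)} (hcv : Convex ℝ P) {u : Euc n → ℝ≥0∞}
    (hu : LC P u) {x q : Euc n} (hx : x ∈ P) (hq : q ∈ interior P) (hqf : u q ≠ ⊤) :
    u x = liminf (fun t : ℝ => u ((1 - t) • x + t • q)) (𝓝[>] 0) := by
  refine le_antisymm (hu.le_liminf_radial hcv hx hq le_rfl) ?_
  by_cases hxt : u x = ⊤
  · rw [hxt]; exact le_top
  have h : Tendsto (fun t : ℝ => ENNReal.ofReal (1 - t) * u x + ENNReal.ofReal t * u q)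
      (𝓝[>] 0) (𝓝 (u x)) := by
    have : Continuous (fun t : ℝ => ENNReal.ofReal (1 - t) * u x + ENNReal.ofReal t * u q) := by
      refine Continuous.add ?_ ?_
      · exact (ENNReal.continuous_mul_const hxt).comp (ENNReal.continuous_ofReal.comp (by fun_prop))
      · exact (ENNReal.continuous_mul_const hqf).comp (ENNReal.continuous_ofReal)
    simpa using (this.tendsto 0).mono_left nhdsWithin_le_nhds
  rw [← h.liminf_eq]
  refine liminf_le_liminf ?_
  filter_upwards [Ioc_mem_nhdsGT (zero_lt_one (α := ℝ))] with t ht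
  exact hu.2.2.le_arith hx (interior_subset hq) ht.1.le ht.2

/-- almost everywhere equal functions are equal. -/
lemma LC.eqOn {n : ℕ} {P : Set (Euc n)} (hcv : Convex ℝ P)
    (hne : (interior P).Nonempty) {u v : Euc n → ℝ≥0∞} (hu : LC P u) (hv : LC P v)
    (hfin : ∀ᵐ x ∂(volume.restrict P), u x ≠ ⊤)
    (huv : u =ᵐ[volume.restrict P] v) : Set.EqOn u v P := by
  have aux : ∀ {u : Euc n → ℝ≥0∞}, LC P u → (∀ᵐ x ∂(volume.restrict P), u x ≠ ⊤) →
      ContinuousOn u (interior P) ∧ ∀ x ∈ interior P, u x ≠ ⊤ := by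
    intro u hu hfin
    have hf : ∀ x ∈ interior P, u x ≠ ⊤ := by
      intro x hx
      have := limsup_finite (P := P) (w := fun _ => u) (fun k => hu.2.2)
        (by simpa using hfin) hx
      simpa using this
    refine ⟨cont_of_logconvex isOpen_interior hcv.interior ?_ hf, hf⟩
    intro x hx y hy
    exact hu.2.2 (interior_subset hx) (interior_subset hy)
  have hfin' : ∀ᵐ x ∂(volume.restrict P), v x ≠ ⊤ := by
    filter_upwards [hfin, huv] with x h1 h2
    rwa [← h2]
  obtain ⟨hc1, hf1⟩ := aux hu hfin
  obtain ⟨hc2, hf2⟩ := aux hv hfin'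
  have hint : Set.EqOn u v (interior P) :=
    Measure.eqOn_open_of_ae_eq (μ := volume)
      (ae_restrict_of_ae_restrict_of_subset interior_subset huv) isOpen_interior hc1 hc2
  intro x hx
  obtain ⟨q, hq⟩ := hne
  rw [hu.eq_liminf_radial hcv hx hq (hf1 q hq), hv.eq_liminf_radial hcv hx hq (hf2 q hq)]
  apply liminf_congr
  filter_upwards [Ioc_mem_nhdsGT (zero_lt_one (α := ℝ))] with t ht
  exact hint (radial_mem hcv hx hq ht.1 ht.2)

lemma lsc_ext_measurable {n : ℕ} {P : Set (Euc n)} (hcl : IsClosed P) {u : Euc n → ℝ≥0∞}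
    (hu : LowerSemicontinuousOn u P) :
    ∃ w : Euc n → ℝ≥0∞, Measurable w ∧ ∀ x ∈ P, w x = u x := by
  classical
  refine ⟨P.piecewise u (fun _ => ⊤), ?_, fun x hx => by simp [hx]⟩
  apply LowerSemicontinuous.measurable
  intro x a ha
  by_cases hx : x ∈ P
  · have h1 : a < u x := by simpa [hx] using ha
    have h2 := hu x hx a h1
    rw [eventually_nhdsWithin_iff] at h2
    filter_upwards [h2] with y hy
    by_cases hyP : y ∈ P
    · simpa [hyP] using hy hyP
    · simpa [hyP] using lt_of_lt_of_le h1 le_top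
  · filter_upwards [hcl.isOpen_compl.mem_nhds hx] with y hy
    have hy : y ∉ P := hy
    simpa [hx, hy] using ha

lemma lsc_aemeasurable {n : ℕ} {P : Set (Euc n)} (hcl : IsClosed P) {u : Euc n → ℝ≥0∞}
    (hu : LowerSemicontinuousOn u P) {m : Measure (Euc n)} {f : Euc n → Euc n} (hf : Measurable f)
    (hm : ∀ᵐ x ∂m, f x ∈ P) : AEMeasurable (fun x => u (f x)) m := by
  obtain ⟨w, hw, hwu⟩ := lsc_ext_measurable hcl hu
  refine ⟨fun x => w (f x), hw.comp hf, ?_⟩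
  filter_upwards [hm] with x hx
  exact (hwu _ hx).symm

lemma bdry_lsc {n : ℕ} {P : Set (Euc n)} (hcv : Convex ℝ P) (hcl : IsClosed P)
    (hne : (interior P).Nonempty) {τ : Measure (Euc n)} [IsFiniteMeasure τ]
    (hτ : ∀ᵐ x ∂τ, x ∈ P) {w : ℕ → Euc n → ℝ≥0∞} (hw : ∀ k, LC P (w k)) {u : Euc n → ℝ≥0∞}
    (hu : LC P u) (huf : ∀ x ∈ interior P, u x ≠ ⊤)
    (hlim : ∀ x ∈ interior P, Tendsto (fun k => w k x) atTop (𝓝 (u x))) :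
    ∫⁻ x, u x ∂τ ≤ liminf (fun k => ∫⁻ x, w k x ∂τ) atTop := by
  obtain ⟨q, hq⟩ := hne
  set L := liminf (fun k => ∫⁻ x, w k x ∂τ) atTop
  have hmeas : ∀ {v : Euc n → ℝ≥0∞}, LC P v → ∀ {t : ℝ}, 0 < t → t ≤ 1 →
      AEMeasurable (fun x => v ((1 - t) • x + t • q)) τ := by
    intro v hv t h0 h1
    refine lsc_aemeasurable hcl hv.1 (f := fun x => (1 - t) • x + t • q) (by fun_prop) ?_
    filter_upwards [hτ] with x hx
    exact interior_subset (radial_mem hcv hx hq h0 h1)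
  have I2 : ∀ t : ℝ, 0 < t → t ≤ 1 → ∫⁻ x, u ((1 - t) • x + t • q) ∂τ ≤
      L + ENNReal.ofReal t * ((u q + 1) * τ Set.univ) := by
    intro t h0 h1
    calc ∫⁻ x, u ((1 - t) • x + t • q) ∂τ
        = ∫⁻ x, liminf (fun k => w k ((1 - t) • x + t • q)) atTop ∂τ := by
          apply lintegral_congr_ae
          filter_upwards [hτ] with x hx
          exact (hlim _ (radial_mem hcv hx hq h0 h1)).liminf_eq.symm
      _ ≤ liminf (fun k => ∫⁻ x, w k ((1 - t) • x + t • q) ∂τ) atTop :=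
          lintegral_liminf_le' (fun k => hmeas (hw k) h0 h1)
      _ ≤ liminf (fun k => ∫⁻ x, w k x ∂τ + ENNReal.ofReal t * ((u q + 1) * τ Set.univ)) atTop := by
          refine liminf_le_liminf ?_
          have hq1 : ∀ᶠ k in atTop, w k q < u q + 1 :=
            (hlim q hq).eventually (gt_mem_nhds (ENNReal.lt_add_right (huf q hq) one_ne_zero))
          filter_upwards [hq1] with k hk
          calc ∫⁻ x, w k ((1 - t) • x + t • q) ∂τ
              ≤ ∫⁻ x, (w k x + ENNReal.ofReal t * (u q + 1)) ∂τ := by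
                apply lintegral_mono_ae
                filter_upwards [hτ] with x hx
                refine ((hw k).2.2.le_arith hx (interior_subset hq) h0.le h1).trans ?_
                gcongr
                calc ENNReal.ofReal (1 - t) * w k x ≤ 1 * w k x := by
                      gcongr
                      rw [ENNReal.ofReal_le_one]; linarith
                  _ = _ := one_mul _
            _ = _ := by
                rw [lintegral_add_right _ measurable_const, lintegral_const, mul_assoc]
      _ = _ := liminf_add_const _ _ _ (by isBoundedDefault) (by isBoundedDefault)
  let t : ℕ → ℝ := fun j => 1 / ((j:ℝ) + 1)
  have ht0 : ∀ j, 0 < t j := fun j => by positivity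
  have ht1 : ∀ j, t j ≤ 1 := fun j => by
    simp only [t]; rw [div_le_one (by positivity)]; linarith [(Nat.cast_nonneg j : (0:ℝ) ≤ j)]
  have htt : Tendsto t atTop (𝓝 0) := tendsto_one_div_add_atTop_nhds_zero_nat
  have htt' : Tendsto t atTop (𝓝[>] 0) :=
    tendsto_nhdsWithin_of_tendsto_nhds_of_eventually_within _ htt (Eventually.of_forall ht0)
  calc ∫⁻ x, u x ∂τ ≤ ∫⁻ x, liminf (fun j => u ((1 - t j) • x + t j • q)) atTop ∂τ := by
        apply lintegral_mono_ae
        filter_upwards [hτ] with x hx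
        exact hu.le_liminf_radial hcv hx hq htt'
    _ ≤ liminf (fun j => ∫⁻ x, u ((1 - t j) • x + t j • q) ∂τ) atTop :=
        lintegral_liminf_le' (fun j => hmeas hu (ht0 j) (ht1 j))
    _ ≤ liminf (fun j => L + ENNReal.ofReal (t j) * ((u q + 1) * τ Set.univ)) atTop :=
        liminf_le_liminf (Eventually.of_forall fun j => I2 _ (ht0 j) (ht1 j))
    _ = L := by
        apply Tendsto.liminf_eq
        have hc : (u q + 1) * τ Set.univ ≠ ⊤ :=
          ENNReal.mul_ne_top (by simp [huf q hq]) (measure_ne_top _ _)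
        have h2 : Tendsto (fun j => ENNReal.ofReal (t j) * ((u q + 1) * τ Set.univ)) atTop (𝓝 0) := by
          have := ((ENNReal.continuous_mul_const hc).comp ENNReal.continuous_ofReal).tendsto 0
          have h3 := this.comp htt
          simp only [Function.comp_apply, ENNReal.ofReal_zero, zero_mul] at h3
          exact h3
        simpa using (tendsto_const_nhds (x := L)).add h2

/-- nonnegative entropy density -/
def phi (a : ℝ) : ℝ := a * Real.log a - a + 1

lemma continuous_phi : Continuous phi := by
  unfold phi
  exact (Real.continuous_mul_log.sub continuous_id).add continuous_const

lemma phi_nonneg {a : ℝ} (ha : 0 ≤ a) : 0 ≤ phi a := by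
  unfold phi
  rcases ha.eq_or_lt with rfl | ha
  · simp
  have h := Real.one_sub_inv_le_log_of_pos ha
  have h2 := mul_le_mul_of_nonneg_left h ha.le
  rw [mul_sub, mul_inv_cancel₀ ha.ne'] at h2
  linarith

lemma bregman {x m : ℝ} (hx : 0 ≤ x) (hm : 0 < m) :
    (√x - √m) ^ 2 ≤ x * Real.log x - x * Real.log m - x + m := by
  have e : (√x - √m)^2 = x - 2 * √x * √m + m := by
    rw [sub_sq, Real.sq_sqrt hx, Real.sq_sqrt hm.le]
  rw [e]
  rcases hx.eq_or_lt with rfl | hx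
  · simp
  have hsx := Real.sqrt_pos.2 hx
  have hsm := Real.sqrt_pos.2 hm
  have h := Real.log_le_sub_one_of_pos (div_pos hsm hsx)
  rw [Real.log_div hsm.ne' hsx.ne', Real.log_sqrt hm.le, Real.log_sqrt hx.le] at h
  have h2 := mul_le_mul_of_nonneg_left h hx.le
  have h3 : x * (√m / √x - 1) = √x * √m - x := by
    have : x = √x * √x := (Real.mul_self_sqrt hx.le).symm
    have h4 : x * (√m / √x) = √x * √m := by
      rw [mul_div_assoc', div_eq_iff hsx.ne']
      nlinarith
    linarith
  nlinarith

lemma phi_mid {a b : ℝ} (ha : 0 ≤ a) (hb : 0 ≤ b) :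
    phi ((a + b) / 2) + (√a - √b) ^ 2 / 4 ≤ (phi a + phi b) / 2 := by
  rcases (add_nonneg ha hb).eq_or_lt with h | h
  · have ha0 : a = 0 := by linarith
    have hb0 : b = 0 := by linarith
    subst ha0; subst hb0; simp
  have hm : 0 < (a + b) / 2 := by linarith
  have h1 := bregman ha hm
  have h2 := bregman hb hm
  unfold phi
  nlinarith [sq_nonneg ((√a - √((a+b)/2)) + (√b - √((a+b)/2)))]

lemma abs_sub_le_sqrt {a b e : ℝ} (ha : 0 ≤ a) (hb : 0 ≤ b) (he : 0 < e) :
    |a - b| ≤ e⁻¹ * (√a - √b) ^ 2 + e * ((a + b) / 2) := by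
  have h : a - b = (√a - √b) * (√a + √b) := by
    have := Real.mul_self_sqrt ha
    have := Real.mul_self_sqrt hb
    ring_nf; nlinarith
  have h2 : (√a + √b)^2 ≤ 2 * (a + b) := by
    have := Real.mul_self_sqrt ha
    have := Real.mul_self_sqrt hb
    nlinarith [sq_nonneg (√a - √b)]
  rw [h, abs_mul]
  have h3 : |√a - √b| * |√a + √b| ≤ e⁻¹ * (√a - √b)^2 + e * ((√a + √b)^2 / 4) := by
    rw [← sq_abs (√a - √b), ← sq_abs (√a + √b)]
    have h4 : 0 ≤ e⁻¹ * (|√a - √b| - e * |√a + √b| / 2)^2 := by positivity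
    have : e⁻¹ * (|√a - √b| - e * |√a + √b| / 2)^2 =
      e⁻¹ * |√a - √b|^2 - |√a - √b| * |√a + √b| + e * (|√a + √b|^2/4) := by
      field_simp; ring
    linarith
  refine h3.trans ?_
  have : (√a + √b)^2 / 4 ≤ (a+b)/2 := by linarith
  gcongr

/-- nonnegative entropy functional -/
def HH {n : ℕ} (ν : Measure (Euc n)) (u : Euc n → ℝ≥0∞) : ℝ≥0∞ :=
  ∫⁻ x, ENNReal.ofReal (phi (u x).toReal) ∂ν

/-- squared Hellinger distance -/
def DD {n : ℕ} (ν : Measure (Euc n)) (u v : Euc n → ℝ≥0∞) : ℝ≥0∞ :=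
  ∫⁻ x, ENNReal.ofReal ((√(u x).toReal - √(v x).toReal) ^ 2) ∂ν

lemma HH_mid {n : ℕ} {ν : Measure (Euc n)} {u v : Euc n → ℝ≥0∞}
    (hu : AEMeasurable u ν) (hv : AEMeasurable v ν)
    (fu : ∀ᵐ x ∂ν, u x ≠ ⊤) (fv : ∀ᵐ x ∂ν, v x ≠ ⊤) :
    HH ν (fun x => 2⁻¹ * (u x + v x)) + 4⁻¹ * DD ν u v ≤ 2⁻¹ * (HH ν u + HH ν v) := by
  unfold HH DD
  have mphi : ∀ {u : Euc n → ℝ≥0∞}, AEMeasurable u ν →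
      AEMeasurable (fun x => ENNReal.ofReal (phi (u x).toReal)) ν := fun h =>
    (continuous_phi.measurable.comp_aemeasurable h.ennreal_toReal).ennreal_ofReal
  have mD : AEMeasurable (fun x => ENNReal.ofReal ((√(u x).toReal - √(v x).toReal) ^ 2)) ν :=
    ((hu.ennreal_toReal.sqrt.sub hv.ennreal_toReal.sqrt).pow_const 2).ennreal_ofReal
  rw [← lintegral_const_mul'' _ mD, ← lintegral_add_left' (mphi hu),
    ← lintegral_const_mul' _ _ (by simp), ← lintegral_add_right' _ (mD.const_mul _)]
  apply lintegral_mono_ae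
  filter_upwards [fu, fv] with x hx hy
  have e : (2⁻¹ * (u x + v x)).toReal = ((u x).toReal + (v x).toReal) / 2 := by
    rw [ENNReal.toReal_mul, ENNReal.toReal_add hx hy]
    simp; ring
  rw [e]
  have h := phi_mid (ENNReal.toReal_nonneg (a := u x)) (ENNReal.toReal_nonneg (a := v x))
  have n1 := phi_nonneg (ENNReal.toReal_nonneg (a := u x))
  have n2 := phi_nonneg (ENNReal.toReal_nonneg (a := v x))
  have n3 : 0 ≤ phi (((u x).toReal + (v x).toReal) / 2) := phi_nonneg (by positivity)
  have i2 : (2⁻¹ : ℝ≥0∞) = ENNReal.ofReal (2⁻¹) := by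
    rw [ENNReal.ofReal_inv_of_pos (by norm_num)]; simp
  have i4 : (4⁻¹ : ℝ≥0∞) = ENNReal.ofReal (4⁻¹) := by
    rw [ENNReal.ofReal_inv_of_pos (by norm_num)]; simp
  rw [i2, i4, ← ENNReal.ofReal_mul (by norm_num), ← ENNReal.ofReal_add n3 (by positivity),
    ← ENNReal.ofReal_add n1 n2, ← ENNReal.ofReal_mul (by norm_num)]
  apply ENNReal.ofReal_le_ofReal
  linarith

lemma L1_le_DD {n : ℕ} {ν : Measure (Euc n)} {u v : Euc n → ℝ≥0∞}
    (hu : AEMeasurable u ν) (hv : AEMeasurable v ν)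
    (fu : ∀ᵐ x ∂ν, u x ≠ ⊤) (fv : ∀ᵐ x ∂ν, v x ≠ ⊤)
    (iu : ∫⁻ x, u x ∂ν = ν Set.univ) (iv : ∫⁻ x, v x ∂ν = ν Set.univ) {e : ℝ} (he : 0 < e) :
    ∫⁻ x, edist (u x).toReal (v x).toReal ∂ν ≤
      ENNReal.ofReal e⁻¹ * DD ν u v + ENNReal.ofReal e * ν Set.univ := by
  unfold DD
  have mD : AEMeasurable (fun x => ENNReal.ofReal ((√(u x).toReal - √(v x).toReal) ^ 2)) ν :=
    ((hu.ennreal_toReal.sqrt.sub hv.ennreal_toReal.sqrt).pow_const 2).ennreal_ofReal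
  have e2 : ν Set.univ = ∫⁻ x, 2⁻¹ * (u x + v x) ∂ν := by
    rw [lintegral_const_mul' _ _ (by simp), lintegral_add_left' hu, iu, iv, ← two_mul, ← mul_assoc,
      ENNReal.inv_mul_cancel (by simp) (by simp), one_mul]
  rw [e2, ← lintegral_const_mul'' _ mD, ← lintegral_const_mul' (ENNReal.ofReal e) _ (by simp),
    ← lintegral_add_left' (mD.const_mul _)]
  apply lintegral_mono_ae
  filter_upwards [fu, fv] with x hx hy
  have i2 : 2⁻¹ * (u x + v x) = ENNReal.ofReal (((u x).toReal + (v x).toReal) / 2) := by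
    rw [div_eq_inv_mul, ENNReal.ofReal_mul (by norm_num), ENNReal.ofReal_inv_of_pos (by norm_num),
      ENNReal.ofReal_add (by positivity) (by positivity), ENNReal.ofReal_toReal hx,
      ENNReal.ofReal_toReal hy]
    simp
  rw [i2, ← ENNReal.ofReal_mul (by positivity), ← ENNReal.ofReal_mul (by positivity),
    ← ENNReal.ofReal_add (by positivity) (by positivity), edist_dist, Real.dist_eq]
  exact ENNReal.ofReal_le_ofReal (abs_sub_le_sqrt (by positivity) (by positivity) he)

/-- The core compactness lemma. -/
lemma core_lemma {n : ℕ} {P : Set (Euc n)} (hcv : Convex ℝ P) (hcl : IsClosed P)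
    (hne : (interior P).Nonempty) {τ : Measure (Euc n)} [IsFiniteMeasure τ]
    (hτ : ∀ᵐ x ∂τ, x ∈ P) {ν : Measure (Euc n)} [IsFiniteMeasure ν] (hν0 : ν ≠ 0)
    (hν : ae ν = ae (volume.restrict P)) 
    (K : ℕ → Set (Euc n → ℝ≥0∞)) (hanti : Antitone K)
    (hM : ∀ k, ∀ u ∈ K k, LC P u ∧ ∫⁻ x, u x ∂ν = ν Set.univ)
    (hmid : ∀ k, ∀ u ∈ K k, ∀ v ∈ K k, (fun x => 2⁻¹ * (u x + v x)) ∈ K k)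
    {C : ℝ≥0∞} (hC : C ≠ ⊤) (hCK : ∀ k, ∃ u ∈ K k, HH ν u ≤ C) :
    ∃ (u : Euc n → ℝ≥0∞) (w : ℕ → Euc n → ℝ≥0∞), LC P u ∧ ∫⁻ x, u x ∂ν = ν Set.univ ∧
      (∀ k, w k ∈ K k) ∧ ∫⁻ x, u x ∂τ ≤ liminf (fun k => ∫⁻ x, w k x ∂τ) atTop ∧
      HH ν u ≤ liminf (fun k => HH ν (w k)) atTop ∧
      liminf (fun k => HH ν (w k)) atTop ≤ ⨆ k, ⨅ v ∈ K k, HH ν v := by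
  have hνP : ∀ᵐ x ∂ν, x ∈ P := by
    have : ∀ᵐ x ∂(volume.restrict P), x ∈ P := ae_restrict_mem hcl.measurableSet
    rwa [← hν] at this
  have meas : ∀ {u}, LC P u → AEMeasurable u ν := fun hu =>
    lsc_aemeasurable hcl hu.1 measurable_id hνP
  have fin : ∀ {u}, LC P u → ∫⁻ x, u x ∂ν = ν Set.univ → ∀ᵐ x ∂ν, u x ≠ ⊤ := by
    intro u hu hi
    filter_upwards [ae_lt_top' (meas hu) (hi.trans_ne (measure_ne_top _ _))] with x hx
    exact hx.ne
  set s : ℕ → ℝ≥0∞ := fun k => ⨅ v ∈ K k, HH ν v with hs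
  have sC : ∀ k, s k ≤ C := by
    intro k
    obtain ⟨u, hu, hu2⟩ := hCK k
    exact (iInf₂_le u hu).trans hu2
  have smono : Monotone s := by
    intro k l hkl
    exact biInf_mono (fun v hv => hanti hkl hv)
  set s0 := ⨆ k, s k with hs0
  have s0C : s0 ≤ C := iSup_le sC
  have s0t : s0 ≠ ⊤ := ne_top_of_le_ne_top hC s0C
  have st : Tendsto s atTop (𝓝 s0) := tendsto_atTop_iSup smono
  have hinv : Tendsto (fun k : ℕ => ((k : ℝ≥0∞) + 1)⁻¹) atTop (𝓝 0) := by
    have := (tendsto_add_atTop_iff_nat 1).2 ENNReal.tendsto_inv_nat_nhds_zero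
    simpa using this
  have hex : ∀ k : ℕ, ∃ w ∈ K k, HH ν w ≤ s k + ((k : ℝ≥0∞) + 1)⁻¹ := by
    intro k
    have h1 : s k < s k + ((k : ℝ≥0∞) + 1)⁻¹ :=
      ENNReal.lt_add_right (ne_top_of_le_ne_top hC (sC k)) (by simp)
    obtain ⟨w, hw⟩ := iInf_lt_iff.1 h1
    obtain ⟨hwK, hw⟩ := iInf_lt_iff.1 hw
    exact ⟨w, hwK, hw.le⟩
  choose w hwK hwH using hex
  have wLC : ∀ k, LC P (w k) := fun k => (hM k _ (hwK k)).1
  have wI : ∀ k, ∫⁻ x, w k x ∂ν = ν Set.univ := fun k => (hM k _ (hwK k)).2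
  set η : ℕ → ℝ≥0∞ := fun k => 2 * (s0 - s k) + 4 * ((k : ℝ≥0∞) + 1)⁻¹ with hη
  have ηt : Tendsto η atTop (𝓝 0) := by
    have h1 : Tendsto (fun k => s0 - s k) atTop (𝓝 (s0 - s0)) :=
      ENNReal.Tendsto.sub tendsto_const_nhds st (Or.inl s0t)
    have h2 := (ENNReal.Tendsto.const_mul h1 (Or.inr (by simp : (2:ℝ≥0∞) ≠ ⊤))).add
      (ENNReal.Tendsto.const_mul hinv (Or.inr (by simp : (4:ℝ≥0∞) ≠ ⊤)))
    simpa using h2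
  have hD : ∀ k l, k ≤ l → DD ν (w k) (w l) ≤ η k := by
    intro k l hkl
    have hm := hmid k _ (hwK k) _ (hanti hkl (hwK l))
    have h1 := HH_mid (meas (wLC k)) (meas (wLC l)) (fin (wLC k) (wI k)) (fin (wLC l) (wI l))
    have h2 : s k ≤ HH ν (fun x => 2⁻¹ * (w k x + w l x)) := iInf₂_le _ hm
    have h3 : ((l : ℝ≥0∞) + 1)⁻¹ ≤ ((k : ℝ≥0∞) + 1)⁻¹ := by
      gcongr
    have h4 : s k + 4⁻¹ * DD ν (w k) (w l) ≤
        2⁻¹ * ((s k + ((k : ℝ≥0∞) + 1)⁻¹) + (s0 + ((k : ℝ≥0∞) + 1)⁻¹)) := by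
      calc _ ≤ _ := add_le_add_left h2 _
        _ ≤ _ := h1
        _ ≤ _ := by
          gcongr
          · exact hwH k
          · exact (hwH l).trans (add_le_add (le_iSup s l) h3)
    have hDt : DD ν (w k) (w l) ≠ ⊤ := by
      intro hD
      rw [hD, ENNReal.mul_top (by simp), add_top, top_le_iff] at h4
      revert h4
      have := ne_top_of_le_ne_top hC (sC k)
      simp [ENNReal.mul_eq_top, this, s0t]
    have hkt := ne_top_of_le_ne_top hC (sC k)
    have hle : s k ≤ s0 := le_iSup s k
    have hit : ((k : ℝ≥0∞) + 1)⁻¹ ≠ ⊤ := by simp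
    simp only [hη]
    generalize ((k : ℝ≥0∞) + 1)⁻¹ = ι at *
    generalize DD ν (w k) (w l) = D at *
    generalize s k = a at *
    lift a to ℝ≥0 using hkt
    lift D to ℝ≥0 using hDt
    lift ι to ℝ≥0 using hit
    rw [← hs0] at *
    clear_value s0
    lift s0 to ℝ≥0 using s0t
    have h5 := ENNReal.toReal_mono (by simp [ENNReal.mul_eq_top]) h4
    rw [← ENNReal.toReal_le_toReal (by simp) (by simp [ENNReal.mul_eq_top])]
    have hsub := ENNReal.toReal_sub_of_le hle (by simp)
    simp only [ENNReal.coe_toReal] at hsub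
    simp [ENNReal.toReal_add, ENNReal.mul_eq_top, hsub, -ENNReal.toReal_sub_of_le] at h5 ⊢
    linarith
  -- L¹ convergence
  have hint : ∀ k, Integrable (fun x => (w k x).toReal) ν := fun k =>
    integrable_toReal_of_lintegral_ne_top (meas (wLC k)) ((wI k).trans_ne (measure_ne_top _ _))
  let f : ℕ → (Euc n →₁[ν] ℝ) := fun k => (hint k).toL1 _
  have hcau : CauchySeq f := by
    rw [EMetric.cauchySeq_iff']
    intro e he
    -- choose e'
    obtain ⟨e', he', hee⟩ : ∃ e' : ℝ, 0 < e' ∧ ENNReal.ofReal e' * ν Set.univ < e := by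
      have h1 : Tendsto (fun e' : ℝ => ENNReal.ofReal e' * ν Set.univ) (𝓝[>] 0) (𝓝 0) := by
        have := ((ENNReal.continuous_mul_const (measure_ne_top ν Set.univ)).comp
          ENNReal.continuous_ofReal).tendsto 0
        simp only [Function.comp_apply, ENNReal.ofReal_zero, zero_mul] at this
        exact this.mono_left nhdsWithin_le_nhds
      obtain ⟨e', h2, h3⟩ := ((h1.eventually (gt_mem_nhds he)).and self_mem_nhdsWithin).exists
      exact ⟨e', h3, h2⟩
    have h2 : Tendsto (fun k => ENNReal.ofReal e'⁻¹ * η k + ENNReal.ofReal e' * ν Set.univ) atTop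
        (𝓝 (ENNReal.ofReal e' * ν Set.univ)) := by
      have := (ENNReal.Tendsto.const_mul ηt (Or.inr (ENNReal.ofReal_ne_top (r := e'⁻¹)))).add
        (tendsto_const_nhds (x := ENNReal.ofReal e' * ν Set.univ))
      simpa using this
    obtain ⟨N, hN⟩ := (h2.eventually (gt_mem_nhds hee)).exists
    refine ⟨N, fun l hl => ?_⟩
    rw [edist_comm, Integrable.edist_toL1_toL1]
    refine lt_of_le_of_lt (L1_le_DD (meas (wLC N)) (meas (wLC l)) (fin (wLC N) (wI N))
      (fin (wLC l) (wI l)) (wI N) (wI l) he') (lt_of_le_of_lt ?_ hN)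
    gcongr
    exact hD N l hl
  obtain ⟨F, hF⟩ := cauchySeq_tendsto_of_complete hcau
  have hFm := tendstoInMeasure_of_tendsto_Lp hF
  obtain ⟨ns, hns, hnsae⟩ := hFm.exists_seq_tendsto_ae
  have hconv : ∀ᵐ x ∂ν, Tendsto (fun k => (w (ns k) x).toReal) atTop (𝓝 (F x)) := by
    have h1 : ∀ᵐ x ∂ν, ∀ k, f k x = (w k x).toReal :=
      ae_all_iff.2 fun k => (hint k).coeFn_toL1
    filter_upwards [hnsae, h1] with x hx h2
    simpa [h2] using hx
  have hFnn : ∀ᵐ x ∂ν, 0 ≤ F x := by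
    filter_upwards [hconv] with x hx
    exact ge_of_tendsto' hx fun k => ENNReal.toReal_nonneg
  let v : Euc n → ℝ≥0∞ := fun x => ENNReal.ofReal (F x)
  have hlim : ∀ᵐ x ∂ν, Tendsto (fun k => w (ns k) x) atTop (𝓝 (v x)) := by
    have h1 : ∀ᵐ x ∂ν, ∀ k, w k x ≠ ⊤ := ae_all_iff.2 fun k => fin (wLC k) (wI k)
    filter_upwards [hconv, h1] with x hx h2
    have := (ENNReal.continuous_ofReal.tendsto _).comp hx
    refine this.congr fun k => ?_
    simp [ENNReal.ofReal_toReal (h2 _)]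
  have hvI : ∫⁻ x, v x ∂ν = ν Set.univ := by
    rw [← ofReal_integral_eq_lintegral_ofReal (L1.integrable_coeFn F) hFnn]
    have h1 : Tendsto (fun k => ∫ x, f k x ∂ν) atTop (𝓝 (∫ x, F x ∂ν)) :=
      (continuous_integral.tendsto F).comp hF
    have h2 : ∀ k, ∫ x, f k x ∂ν = (ν Set.univ).toReal := by
      intro k
      rw [integral_congr_ae (hint k).coeFn_toL1, integral_toReal (meas (wLC k))
        (ae_lt_top' (meas (wLC k)) ((wI k).trans_ne (measure_ne_top _ _))), wI k]
    simp only [h2] at h1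
    rw [tendsto_nhds_unique h1 tendsto_const_nhds, ENNReal.ofReal_toReal (measure_ne_top _ _)]
  have hvnz : ¬ ∀ᵐ x ∂ν, v x = 0 := by
    intro h
    have : ∫⁻ x, v x ∂ν = 0 := by
      rw [lintegral_congr_ae (g := fun _ => 0) h]; simp
    rw [hvI, Measure.measure_univ_eq_zero] at this
    exact hν0 this
  obtain ⟨u, huLC, hul, huf, -, huv⟩ := limit_lemma hcv hcl hne (w := fun k => w (ns k))
    (fun k => (wLC _).2.2) (v := v) (by rw [← hν]; exact hlim)
    (Eventually.of_forall fun x => ENNReal.ofReal_ne_top) (by rw [← hν]; exact hvnz)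
  have huv : u =ᵐ[ν] v := by
    unfold EventuallyEq; rw [hν]; exact huv
  refine ⟨u, fun k => w (ns k), huLC, ?_, ?_, ?_, ?_, ?_⟩
  · rw [lintegral_congr_ae huv, hvI]
  · intro k
    exact hanti (hns.id_le k) (hwK _)
  · exact bdry_lsc hcv hcl hne hτ (fun k => wLC _) huLC huf hul
  · unfold HH
    refine le_trans (le_of_eq ?_) (lintegral_liminf_le' (u := atTop)
      (f := fun k x => ENNReal.ofReal (phi (w (ns k) x).toReal)) (fun k =>
      (continuous_phi.measurable.comp_aemeasurable (meas (wLC (ns k))).ennreal_toReal).ennreal_ofReal))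
    apply lintegral_congr_ae
    filter_upwards [hconv, huv, hFnn] with x h1 h2 h3
    symm
    apply Tendsto.liminf_eq
    rw [h2, ENNReal.toReal_ofReal h3]
    exact (ENNReal.continuous_ofReal.tendsto _).comp ((continuous_phi.tendsto _).comp h1)
  · have h1 : Tendsto (fun k => s (ns k) + ((ns k : ℝ≥0∞) + 1)⁻¹) atTop (𝓝 (s0 + 0)) :=
      (st.add hinv).comp hns.tendsto_atTop
    rw [add_zero] at h1
    rw [← h1.liminf_eq]
    exact liminf_le_liminf (Eventually.of_forall fun k => hwH _)

lemma aff_eval {n : ℕ} (L : Euc n →ᵃ[ℝ] ℝ) (z v : Euc n) (t : ℝ) :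
    L (z + t • v) = L z + t * L.linear v := by
  have := L.map_vadd z (t • v)
  simp only [vadd_eq_add, map_smul, smul_eq_mul] at this
  rw [add_comm z, this, add_comm]

lemma line_cont {n : ℕ} (z v : Euc n) : Tendsto (fun t : ℝ => z + t • v) (𝓝 0) (𝓝 z) := by
  have : Continuous (fun t : ℝ => z + t • v) := by fun_prop
  simpa using this.tendsto 0

lemma pos_interior {n : ℕ} {P : Set (Euc n)} {L : Euc n →ᵃ[ℝ] ℝ} (hL : L ≠ 0)
    (hP : ∀ x ∈ P, 0 ≤ L x) {q : Euc n} (hq : q ∈ interior P) : 0 < L q := by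
  refine lt_of_le_of_ne (hP q (interior_subset hq)) fun h0 => hL ?_
  have hlin : ∀ v, 0 ≤ L.linear v := by
    intro v
    have := (line_cont q v).eventually (mem_interior_iff_mem_nhds.1 hq)
    obtain ⟨t, ht, ht0⟩ := ((this.filter_mono nhdsWithin_le_nhds).and
      (self_mem_nhdsWithin : ∀ᶠ t in 𝓝[>] (0:ℝ), t ∈ Set.Ioi 0)).exists
    have h1 := hP _ ht
    rw [aff_eval, ← h0, zero_add] at h1
    exact (mul_nonneg_iff_of_pos_left ht0).1 h1
  ext x
  have h1 := aff_eval L q (x - q) 1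
  have h2 := hlin (x - q)
  have h3 := hlin (-(x - q))
  rw [map_neg] at h3
  simp only [one_smul, add_sub_cancel, one_mul] at h1
  rw [h1, ← h0]
  show 0 + L.linear (x - q) = 0
  linarith

lemma polytope_facets {n : ℕ} {P : Set (Euc n)} (hP : IsPolytope P) :
    ∃ (m : ℕ) (L : Fin m → (Euc n →ᵃ[ℝ] ℝ)) (J : Finset (Fin m)),
      (∀ k ∈ J, (L k).linear ≠ 0) ∧ (P = {x | ∀ k ∈ J, 0 ≤ L k x}) ∧
      (∀ k ∈ J, IsFacetOf P {x ∈ P | L k x = 0}) ∧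
      (∀ k ∈ J, {x ∈ P | L k x = 0} ⊆ frontier P) ∧
      (∀ x ∈ frontier P, ∃ k ∈ J, x ∈ P ∧ L k x = 0) ∧
      (∀ x ∈ P, ∀ v : Euc n, (∀ k ∈ J, L k x = 0 → (L k).linear v = 0) →
        ∃ t : ℝ, 0 < t ∧ x + t • v ∈ P) := by
  obtain ⟨hcomp, ⟨q, hq⟩, m, L, hL0, hPeq⟩ := hP
  have hcl : IsClosed P := hcomp.isClosed
  have hcont : ∀ k, Continuous (L k) := fun k => (L k).continuous_of_finiteDimensional
  have hnonneg : ∀ k, ∀ x ∈ P, 0 ≤ L k x := by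
    intro k x hx
    rw [hPeq] at hx
    exact Set.mem_iInter.1 hx k
  have hqpos : ∀ k, 0 < L k q := fun k => pos_interior (hL0 k) (hnonneg k) hq
  obtain ⟨J, hJ⟩ := (Set.toFinite {J : Finset (Fin m) | P = {x | ∀ k ∈ J, 0 ≤ L k x}}).exists_minimal
    ⟨Finset.univ, by simp [hPeq, Set.ofPred_forall]⟩
  have hJP : P = {x | ∀ k ∈ J, 0 ≤ L k x} := hJ.1
  have hz : ∀ k ∈ J, ∃ z, L k z = 0 ∧ (∀ j ∈ J, j ≠ k → 0 < L j z) ∧ (L k).linear ≠ 0 := by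
    intro k hk
    have h1 : ¬ (P = {x | ∀ j ∈ J.erase k, 0 ≤ L j x}) := by
      intro h
      have := hJ.2 (y := J.erase k) h (Finset.erase_subset _ _)
      exact Finset.notMem_erase k J (this hk)
    have h2 : ∃ y, (∀ j ∈ J.erase k, 0 ≤ L j y) ∧ y ∉ P := by
      by_contra! h
      apply h1
      apply Set.Subset.antisymm
      · intro x hx j _
        exact hnonneg j x hx
      · intro x hx
        exact h x hx
    obtain ⟨y, hy, hyP⟩ := h2
    have hky : L k y < 0 := by
      by_contra! h
      apply hyP
      rw [hJP]
      intro j hj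
      by_cases hjk : j = k
      · rw [hjk]; exact h
      · exact hy j (Finset.mem_erase.2 ⟨hjk, hj⟩)
    have hkq := hqpos k
    set s := L k q / (L k q - L k y) with hs
    have hd : 0 < L k q - L k y := by linarith
    have hs0 : 0 < s := div_pos hkq hd
    have hs1 : s < 1 := by rw [hs, div_lt_one hd]; linarith
    have hlin : ∀ j, (L j).linear (y - q) = L j y - L j q := by
      intro j
      have := aff_eval (L j) q (y - q) 1
      simp only [one_smul, add_sub_cancel, one_mul] at this
      linarith
    refine ⟨q + s • (y - q), ?_, ?_, ?_⟩
    · rw [aff_eval, hlin, hs]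
      field_simp
      ring
    · intro j hj hjk
      rw [aff_eval, hlin]
      have := hy j (Finset.mem_erase.2 ⟨hjk, hj⟩)
      have := hqpos j
      nlinarith
    · intro h
      have := hlin k
      rw [h] at this
      simp at this
      linarith
  have hstep : ∀ x ∈ P, ∀ v : Euc n, (∀ k ∈ J, L k x = 0 → (L k).linear v = 0) →
        ∃ t : ℝ, 0 < t ∧ x + t • v ∈ P := by
    intro x hx v hv
    have : ∀ᶠ t in 𝓝 (0:ℝ), ∀ k ∈ J, 0 ≤ L k (x + t • v) := by
      rw [Filter.eventually_all_finset]
      intro k hk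
      rcases (hnonneg k x hx).eq_or_lt with h | h
      · refine Eventually.of_forall fun t => ?_
        rw [aff_eval, hv k hk h.symm, ← h]
        simp
      · have := (((hcont k).tendsto x).comp (line_cont x v)).eventually (lt_mem_nhds h)
        exact this.mono fun t ht => ht.le
    obtain ⟨t, ht, ht0⟩ := ((this.filter_mono nhdsWithin_le_nhds).and
      (self_mem_nhdsWithin : ∀ᶠ t in 𝓝[>] (0:ℝ), t ∈ Set.Ioi 0)).exists
    exact ⟨t, ht0, by rw [hJP]; exact ht⟩
  refine ⟨m, L, J, fun k hk => (hz k hk).choose_spec.2.2, hJP, ?_, ?_, ?_, hstep⟩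
  · intro k hk
    obtain ⟨z, hz0, hzp, hlin⟩ := hz k hk
    have hzP : z ∈ P := by
      rw [hJP]
      intro j hj
      by_cases hjk : j = k
      · rw [hjk, hz0]
      · exact (hzp j hj hjk).le
    refine ⟨⟨L k, hL0 k, hnonneg k, rfl⟩, ?_⟩
    have hspan : vectorSpan ℝ {x ∈ P | L k x = 0} = LinearMap.ker (L k).linear := by
      apply le_antisymm
      · rw [vectorSpan_def, Submodule.span_le]
        rintro _ ⟨a, ha, b, hb, rfl⟩
        simp only [SetLike.mem_coe, LinearMap.mem_ker]
        rw [AffineMap.linearMap_vsub, ha.2, hb.2]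
        simp
      · intro v hv
        rw [LinearMap.mem_ker] at hv
        obtain ⟨t, ht, htP⟩ := hstep z hzP v (by
          intro j hj hj0
          by_cases hjk : j = k
          · rw [hjk]; exact hv
          · exact absurd hj0 (hzp j hj hjk).ne')
        have h1 : z + t • v ∈ {x ∈ P | L k x = 0} := ⟨htP, by rw [aff_eval, hz0, hv]; simp⟩
        have h2 := vsub_mem_vectorSpan ℝ h1 (show z ∈ {x ∈ P | L k x = 0} from ⟨hzP, hz0⟩)
        simp only [vsub_eq_sub, add_sub_cancel_left] at h2
        exact (Submodule.smul_mem_iff _ ht.ne').1 h2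
    rw [hspan]
    have := Module.Dual.finrank_ker_add_one_of_ne_zero (f := (L k).linear) hlin
    simpa using this
  · rintro k hk x ⟨hx, hx0⟩
    rw [frontier, hcl.closure_eq]
    exact ⟨hx, fun hi => (pos_interior (hL0 k) (hnonneg k) hi).ne' hx0⟩
  · intro x hx
    rw [frontier, hcl.closure_eq] at hx
    by_contra! h
    apply hx.2
    rw [mem_interior_iff_mem_nhds]
    have : ∀ᶠ y in 𝓝 x, ∀ k ∈ J, 0 ≤ L k y := by
      rw [Filter.eventually_all_finset]
      intro k hk
      have h1 : 0 < L k x := lt_of_le_of_ne (hnonneg k x hx.1) (h k hk hx.1).symm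
      exact (((hcont k).tendsto x).eventually (lt_mem_nhds h1)).mono fun t ht => ht.le
    filter_upwards [this] with y hy
    rw [hJP]; exact hy

/-- Forget the `i`-th coordinate. -/
def prj {m : ℕ} (i : Fin (m + 1)) (x : Euc (m + 1)) : Fin m → ℝ := fun j => x (i.succAbove j)

lemma prj_lip {m : ℕ} (i : Fin (m + 1)) : LipschitzWith 1 (prj i) := by
  refine LipschitzWith.of_dist_le_mul fun x y => ?_
  simp only [NNReal.coe_one, one_mul]
  rw [dist_pi_le_iff dist_nonneg]
  intro j
  have := PiLp.norm_apply_le (x - y) (i.succAbove j)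
  rw [dist_eq_norm, dist_eq_norm]
  simpa [prj] using this

lemma haus_pi (m : ℕ) : (Measure.hausdorffMeasure (m : ℝ) : Measure (Fin m → ℝ)) = volume := by
  have := hausdorffMeasure_pi_real (ι := Fin m)
  simpa using this

/-- unit coordinate vector -/
abbrev ee {n : ℕ} (i : Fin n) : Euc n := EuclideanSpace.single i (1 : ℝ)

lemma exists_coord {n : ℕ} {ℓ : Euc n →ₗ[ℝ] ℝ} (h : ℓ ≠ 0) : ∃ i, ℓ (ee i) ≠ 0 := by
  by_contra! h'
  apply h
  apply (EuclideanSpace.basisFun (Fin n) ℝ).toBasis.ext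
  intro i
  simpa using h' i

/-- linear section of the coordinate projection -/
def sect {m : ℕ} (i : Fin (m + 1)) : (Fin m → ℝ) →ₗ[ℝ] Euc (m + 1) :=
  ∑ j, (LinearMap.proj j : (Fin m → ℝ) →ₗ[ℝ] ℝ).smulRight (ee (i.succAbove j))

lemma sect_prj {m : ℕ} (i : Fin (m + 1)) (x : Euc (m + 1)) :
    x = sect i (prj i x) + x i • ee i := by
  have h := (EuclideanSpace.basisFun (Fin (m + 1)) ℝ).sum_repr x
  rw [Fin.sum_univ_succAbove _ i] at h
  simp only [EuclideanSpace.basisFun_repr, EuclideanSpace.basisFun_apply] at h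
  refine h.symm.trans ((add_comm _ _).trans ?_)
  congr 1
  simp [sect, prj]

lemma haus_finite {m : ℕ} {L : Euc (m + 1) →ᵃ[ℝ] ℝ} (hL : L.linear ≠ 0) {F : Set (Euc (m + 1))}
    (hF : Bornology.IsBounded F) (hFL : ∀ x ∈ F, L x = 0) :
    (Measure.hausdorffMeasure (m : ℝ) : Measure (Euc (m + 1))) F < ⊤ := by
  obtain ⟨i, hi⟩ := exists_coord hL
  let A : (Fin m → ℝ) →ₗ[ℝ] Euc (m + 1) :=
    sect i - (((L.linear (ee i))⁻¹ • L.linear).comp (sect i)).smulRight (ee i)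
  let c : Euc (m + 1) := - (L 0 / L.linear (ee i)) • ee i
  let A' := LinearMap.toContinuousLinearMap A
  have hlip : LipschitzWith ‖A'‖₊ (fun y => A' y + c) := by
    have := A'.lipschitz.add (LipschitzWith.const c)
    simpa using this
  have hsub : F ⊆ (fun y => A' y + c) '' (prj i '' F) := by
    intro x hx
    refine ⟨prj i x, ⟨x, hx, rfl⟩, ?_⟩
    have h1 := aff_eval L 0 x 1
    have h2 := sect_prj i x
    have h3 : L.linear x = L.linear (sect i (prj i x)) + x i * L.linear (ee i) := by
      conv_lhs => rw [h2]
      simp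
    simp only [zero_add, one_smul, one_mul, hFL x hx] at h1
    have h4 : x i = - ((L.linear (ee i))⁻¹ * L.linear (sect i (prj i x))) - L 0 / L.linear (ee i) := by
      field_simp
      linarith
    have h5 : A' (prj i x) = sect i (prj i x) -
      ((L.linear (ee i))⁻¹ * L.linear (sect i (prj i x))) • ee i := by
      simp [A', A]
    show A' (prj i x) + c = x
    conv_rhs => rw [h2, h4]
    rw [h5]
    simp only [c]
    module
  have hb : Bornology.IsBounded (prj i '' F) := (prj_lip i).isBounded_image hF
  calc _ ≤ _ := measure_mono hsub
    _ ≤ _ := hlip.hausdorffMeasure_image_le (by positivity) _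
    _ < ⊤ := by
      refine ENNReal.mul_lt_top ?_ ?_
      · exact ENNReal.rpow_lt_top_of_nonneg (by positivity) (by simp)
      · rw [haus_pi]; exact hb.measure_lt_top

/-- projection to the hyperplane `L = 0` in the direction `i` -/
def hpr {n : ℕ} (L : Euc n →ᵃ[ℝ] ℝ) (i : Fin n) (x : Fin n → ℝ) : Euc n :=
  WithLp.toLp 2 x - (L (WithLp.toLp 2 x) / L.linear (ee i)) • ee i

lemma hpr_meas {n : ℕ} (L : Euc n →ᵃ[ℝ] ℝ) (i : Fin n) : Measurable (hpr L i) := by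
  have h1 : Continuous L := L.continuous_of_finiteDimensional
  have h2 : Continuous (fun x : Fin n → ℝ => WithLp.toLp 2 x) := PiLp.continuous_toLp 2 _
  have : Continuous (hpr L i) := by
    unfold hpr
    exact h2.sub (((h1.comp h2).div_const _).smul continuous_const)
  exact this.measurable

lemma hpr_update {n : ℕ} (L : Euc n →ᵃ[ℝ] ℝ) (i : Fin n) (hi : L.linear (ee i) ≠ 0)
    (x : Fin n → ℝ) (t : ℝ) : hpr L i (Function.update x i t) = hpr L i x := by
  have : WithLp.toLp 2 (Function.update x i t) =
      (WithLp.toLp 2 x : Euc n) + (t - x i) • ee i := by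
    ext j
    by_cases h : j = i
    · subst h; simp
    · simp [h]
  unfold hpr
  rw [this, aff_eval, add_div, mul_div_assoc, div_self hi]
  module

lemma prj_hpr {m : ℕ} (L : Euc (m + 1) →ᵃ[ℝ] ℝ) (i : Fin (m + 1)) (x : Fin (m + 1) → ℝ) :
    prj i (hpr L i x) = fun j => x (i.succAbove j) := by
  ext j
  simp [prj, hpr, Fin.succAbove_ne]

lemma hpr_eq {n : ℕ} (L : Euc n →ᵃ[ℝ] ℝ) (i : Fin n) (hi : L.linear (ee i) ≠ 0) (x : Euc n) (t : ℝ)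
    (h0 : L (x + t • ee i) = 0) : hpr L i (WithLp.ofLp x) = x + t • ee i := by
  rw [aff_eval] at h0
  have : L x / L.linear (ee i) = -t := by
    rw [div_eq_iff hi]; linarith
  unfold hpr
  rw [WithLp.toLp_ofLp, this]
  module

lemma slab_est {m : ℕ} (L : Euc (m + 1) →ᵃ[ℝ] ℝ) (i : Fin (m + 1))
    {G : Set (Euc (m + 1))} (hG : MeasurableSet G) {g : Euc (m + 1) → ℝ≥0∞} (hg : Measurable g) :
    ∫⁻ x in {x : Fin (m + 1) → ℝ | x i ∈ Set.Icc (0:ℝ) 1}, G.indicator g (hpr L i x) ≤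
      ∫⁻ x in G, g x ∂(Measure.hausdorffMeasure (m : ℝ)) := by
  set lam := (volume : Measure (Fin (m + 1) → ℝ)).restrict {x | x i ∈ Set.Icc (0:ℝ) 1} with hlam
  have h1 : ∫⁻ x, G.indicator g (hpr L i x) ∂lam =
      ∫⁻ x in G, g x ∂(lam.map (hpr L i)) := by
    rw [← lintegral_indicator hG, lintegral_map (hg.indicator hG) (hpr_meas L i)]
  rw [h1]
  refine lintegral_mono' ?_ le_rfl
  rw [Measure.le_iff]
  intro B hB
  rw [Measure.restrict_apply hB, Measure.restrict_apply hB,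
    Measure.map_apply (hpr_meas L i) (hB.inter hG)]
  set T := toMeasurable volume (prj i '' (B ∩ G)) with hT
  have hTm : MeasurableSet T := measurableSet_toMeasurable _ _
  have h2 : hpr L i ⁻¹' (B ∩ G) ∩ {x | x i ∈ Set.Icc (0:ℝ) 1} ⊆
      (MeasurableEquiv.piFinSuccAbove (fun _ => ℝ) i) ⁻¹' (Set.Icc (0:ℝ) 1 ×ˢ T) := by
    rintro x ⟨hx, hxi⟩
    refine ⟨hxi, subset_toMeasurable _ _ ⟨hpr L i x, hx, ?_⟩⟩
    rw [prj_hpr]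
    rfl
  have hs : MeasurableSet {x : Fin (m + 1) → ℝ | x i ∈ Set.Icc (0:ℝ) 1} :=
    (measurable_pi_apply i) measurableSet_Icc
  rw [hlam, Measure.restrict_apply' hs]
  calc _ ≤ _ := measure_mono h2
    _ = volume (Set.Icc (0:ℝ) 1 ×ˢ T) :=
      (volume_preserving_piFinSuccAbove (fun _ => ℝ) i).measure_preimage
        (measurableSet_Icc.prod hTm).nullMeasurableSet
    _ = volume (prj i '' (B ∩ G)) := by
      rw [Measure.volume_eq_prod, Measure.prod_prod, hT, measure_toMeasurable]
      simp
    _ = Measure.hausdorffMeasure (m : ℝ) (prj i '' (B ∩ G)) := by rw [haus_pi]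
    _ ≤ _ := (prj_lip i).hausdorffMeasure_image_le (by positivity) _
    _ = _ := by simp

open Classical in
lemma chord {n M : ℕ} {P : Set (Euc n)} (hcomp : IsCompact P)
    {L : Fin M → (Euc n →ᵃ[ℝ] ℝ)} {J : Finset (Fin M)}
    (hstep : ∀ x ∈ P, ∀ v : Euc n, (∀ k ∈ J, L k x = 0 → (L k).linear v = 0) →
        ∃ t : ℝ, 0 < t ∧ x + t • v ∈ P)
    {u : Euc n → ℝ≥0∞} (hu : LC P u) (i : Fin n) {x : Euc n} (hx : x ∈ P) :
    u x ≤ ∑ k ∈ J with (L k).linear (ee i) ≠ 0,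
      {y ∈ P | L k y = 0}.indicator u (hpr (L k) i (WithLp.ofLp x)) := by
  set R := ∑ k ∈ J with (L k).linear (ee i) ≠ 0,
      {y ∈ P | L k y = 0}.indicator u (hpr (L k) i (WithLp.ofLp x)) with hR
  have key : ∀ t : ℝ, x + t • ee i ∈ P → (∃ k ∈ J, L k (x + t • ee i) = 0 ∧
      (L k).linear (ee i) ≠ 0) → u (x + t • ee i) ≤ R := by
    rintro t ht ⟨k, hk, h0, hne⟩
    have h1 : {y ∈ P | L k y = 0}.indicator u (hpr (L k) i (WithLp.ofLp x)) = u (x + t • ee i) := by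
      rw [hpr_eq _ _ hne x t h0, Set.indicator_of_mem]
      exact ⟨ht, h0⟩
    rw [← h1]
    exact Finset.single_le_sum
      (f := fun k => {y ∈ P | L k y = 0}.indicator u (hpr (L k) i (WithLp.ofLp x)))
      (fun _ _ => zero_le) (Finset.mem_filter.2 ⟨hk, hne⟩)
  set I : Set ℝ := {t | x + t • ee i ∈ P} with hI
  have hIc : IsCompact I := by
    have hcont : Continuous (fun t : ℝ => x + t • ee i) := by fun_prop
    refine Metric.isCompact_of_isClosed_isBounded (hcomp.isClosed.preimage hcont) ?_
    obtain ⟨C, hC⟩ := hcomp.isBounded.exists_norm_le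
    refine (Metric.isBounded_iff_subset_closedBall 0).2 ⟨C + ‖x‖, fun t ht => ?_⟩
    have h1 := hC _ ht
    have h2 : ‖t • (ee i : Euc n)‖ ≤ ‖x + t • ee i‖ + ‖x‖ := by
      have := norm_sub_le (x + t • (ee i : Euc n)) x
      simpa using this
    rw [norm_smul] at h2
    simp at h2
    simp
    linarith
  have h0I : (0:ℝ) ∈ I := by simp [hI, hx]
  obtain ⟨b, hb, hbmax⟩ := hIc.exists_isGreatest ⟨0, h0I⟩
  obtain ⟨a, ha, hamin⟩ := hIc.exists_isLeast ⟨0, h0I⟩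
  have hb0 : 0 ≤ b := hbmax h0I
  have ha0 : a ≤ 0 := hamin h0I
  have hbR : u (x + b • ee i) ≤ R := by
    refine key b hb ?_
    by_contra! h
    obtain ⟨t, ht, htP⟩ := hstep _ hb (ee i) h
    have h2 : x + (b + t) • ee i ∈ P := by
      convert htP using 1; module
    have := hbmax h2
    linarith
  have haR : u (x + a • ee i) ≤ R := by
    refine key a ha ?_
    by_contra! h
    obtain ⟨t, ht, htP⟩ := hstep _ ha (-(ee i)) (fun k hk h0 => by rw [map_neg, h k hk h0, neg_zero])
    have h2 : x + (a - t) • ee i ∈ P := by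
      convert htP using 1; module
    have := hamin h2
    linarith
  rcases eq_or_lt_of_le (ha0.trans hb0) with hab | hab
  · have : b = 0 := by linarith
    simpa [this] using hbR
  · have hd : 0 < b - a := by linarith
    have hs0 : 0 ≤ -a / (b - a) := div_nonneg (by linarith) hd.le
    have hs1 : -a / (b - a) ≤ 1 := by rw [div_le_one hd]; linarith
    have h1 := hu.2.2.le_arith ha hb hs0 hs1
    have h2 : (1 - -a / (b - a)) • (x + a • ee i) + (-a / (b - a)) • (x + b • ee i) = x := by
      have : x = x + ((1 - -a / (b - a)) * a + (-a / (b - a)) * b) • ee i := by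
        have : (1 - -a / (b - a)) * a + (-a / (b - a)) * b = 0 := by
          field_simp; ring
        rw [this]; simp
      conv_rhs => rw [this]
      module
    rw [h2] at h1
    calc u x ≤ _ := h1
      _ ≤ ENNReal.ofReal (1 - -a / (b - a)) * R + ENNReal.ofReal (-a / (b - a)) * R := by gcongr
      _ = R := by
        rw [← add_mul, ← ENNReal.ofReal_add (by linarith) hs0]
        simp

lemma polytope_convex {n : ℕ} {P : Set (Euc n)} (hP : IsPolytope P) : Convex ℝ P := by
  obtain ⟨_, _, m, L, _, hPeq⟩ := hP
  rw [hPeq]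
  refine convex_iInter fun k => ?_
  exact (convex_Ici (0:ℝ)).affine_preimage (L k)

open Classical in
lemma key_est {m : ℕ} (S : NSystem (m + 1)) :
    S.σ (frontier S.P) < ⊤ ∧
    ∃ r : ℝ, 0 < r ∧ (1 ≤ m → (((m + 1 : ℕ) : ℝ) / (((m + 1 : ℕ) : ℝ) - 1)) = 1 + r) ∧
    ∃ A : ℝ≥0∞, A ≠ ⊤ ∧ ∀ u, LC S.P u →
      ∫⁻ x in S.P, u x ^ (1 + r) ∂S.μ ≤ A * (∫⁻ x in frontier S.P, u x ∂S.σ) ^ (1 + r) := by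
  obtain ⟨M, L, J, hlin, hPJ, hfac, hfront, hcover, hstep⟩ := polytope_facets S.simple.1
  have hcomp : IsCompact S.P := S.simple.1.1
  have hcl := hcomp.isClosed
  have hflat : ∀ k, ∃ c : ℝ, k ∈ J → 0 < c ∧ S.σ.restrict {x ∈ S.P | L k x = 0} =
      ENNReal.ofReal c • (Measure.hausdorffMeasure (m : ℝ)).restrict {x ∈ S.P | L k x = 0} := by
    intro k
    by_cases hk : k ∈ J
    · obtain ⟨c, hc, h⟩ := S.flat_bdry _ (hfac k hk)
      refine ⟨c, fun _ => ⟨hc, ?_⟩⟩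
      simpa using h
    · exact ⟨0, fun h => absurd h hk⟩
  choose c hc using hflat
  set F : Fin M → Set (Euc (m + 1)) := fun k => {x ∈ S.P | L k x = 0} with hF
  have hFcl : ∀ k, IsClosed (F k) := fun k =>
    hcl.inter (isClosed_eq (L k).continuous_of_finiteDimensional continuous_const)
  have hFm : ∀ k, MeasurableSet (F k) := fun k => (hFcl k).measurableSet
  constructor
  · calc S.σ (frontier S.P) ≤ S.σ (⋃ k ∈ J, F k) := by
          apply measure_mono
          intro x hx
          obtain ⟨k, hk, h1⟩ := hcover x hx
          exact Set.mem_biUnion hk h1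
      _ ≤ ∑ k ∈ J, S.σ (F k) := measure_biUnion_finset_le _ _
      _ < ⊤ := by
        refine ENNReal.sum_lt_top.2 fun k hk => ?_
        rw [← Measure.restrict_apply_self, (hc k hk).2]
        have hfin : (Measure.hausdorffMeasure (m : ℝ) : Measure (Euc (m + 1))) (F k) < ⊤ :=
          haus_finite (hlin k hk) (hcomp.isBounded.subset fun x (hx : x ∈ F k) => hx.1)
            fun x (hx : x ∈ F k) => hx.2
        simp only [Measure.smul_apply, smul_eq_mul]
        refine ENNReal.mul_lt_top (by simp) (lt_of_le_of_lt ?_ hfin)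
        exact Measure.restrict_apply_le _ _
  obtain ⟨c0, hc0, hμ⟩ := S.flat
  have hvolP : (volume : Measure (Euc (m + 1))) S.P < ⊤ := hcomp.measure_lt_top
  set A0 : ℝ≥0∞ := ((m + 1 : ℕ) : ℝ≥0∞) * ∑ k ∈ J, (ENNReal.ofReal (c k))⁻¹ with hA0
  have hA0t : A0 ≠ ⊤ := by
    refine ENNReal.mul_ne_top (by simp) (ENNReal.sum_ne_top.2 fun k hk => ?_)
    simp [(hc k hk).1]
  -- the basic construction
  have basic : ∀ u, LC S.P u → ∃ f : (Fin (m + 1) → ℝ) → ℝ≥0∞, Measurable f ∧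
      (∫⁻ x, f x ≤ A0 * ∫⁻ x in frontier S.P, u x ∂S.σ) ∧
      ∀ x ∈ S.P, ∀ i, u x ≤ ∫⁻ t, f (Function.update (WithLp.ofLp x) i t) := by
    intro u hu
    obtain ⟨w, hw, hwu⟩ := lsc_ext_measurable hcl hu.1
    set fi : Fin (m + 1) → (Fin (m + 1) → ℝ) → ℝ≥0∞ := fun i x =>
      ∑ k ∈ J with (L k).linear (ee i) ≠ 0, (F k).indicator w (hpr (L k) i x) with hfi
    have hfim : ∀ i, Measurable (fi i) := by
      intro i
      refine Finset.measurable_sum _ fun k _ => ?_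
      exact (hw.indicator (hFm k)).comp (hpr_meas (L k) i)
    have hslab : ∀ i, MeasurableSet {x : Fin (m + 1) → ℝ | x i ∈ Set.Icc (0:ℝ) 1} := fun i =>
      (measurable_pi_apply i) measurableSet_Icc
    refine ⟨fun x => ∑ i, {x : Fin (m + 1) → ℝ | x i ∈ Set.Icc (0:ℝ) 1}.indicator (fi i) x,
      ?_, ?_, ?_⟩
    · exact Finset.measurable_sum _ fun i _ => (hfim i).indicator (hslab i)
    · rw [lintegral_finsetSum _ fun i _ => (hfim i).indicator (hslab i)]
      calc _ ≤ ∑ i : Fin (m + 1), (∑ k ∈ J, (ENNReal.ofReal (c k))⁻¹) *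
              ∫⁻ x in frontier S.P, u x ∂S.σ := by
            refine Finset.sum_le_sum fun i _ => ?_
            rw [lintegral_indicator (hslab i)]
            simp only [hfi]
            rw [lintegral_finsetSum (f := fun k x => (F k).indicator w (hpr (L k) i x)) _ fun k _ =>
              (hw.indicator (hFm k)).comp (hpr_meas (L k) i), Finset.sum_mul]
            refine (Finset.sum_le_sum_of_subset (Finset.filter_subset _ _)).trans ?_
            refine Finset.sum_le_sum fun k hk => ?_
            refine (slab_est (L k) i (hFm k) hw).trans ?_
            have h1 : ∫⁻ x in F k, w x ∂S.σ = ENNReal.ofReal (c k) *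
                ∫⁻ x in F k, w x ∂(Measure.hausdorffMeasure (m : ℝ)) := by
              rw [(hc k hk).2, lintegral_smul_measure, smul_eq_mul]
            have h2 : ∫⁻ x in F k, w x ∂S.σ ≤ ∫⁻ x in frontier S.P, u x ∂S.σ := by
              rw [setLIntegral_congr_fun (hFm k) (fun x hx => hwu x hx.1)]
              exact lintegral_mono_set (hfront k hk)
            have hcp : ENNReal.ofReal (c k) ≠ 0 := by simp [(hc k hk).1]
            rw [← ENNReal.mul_le_iff_le_inv hcp ENNReal.ofReal_ne_top, ← h1]
            exact h2
        _ = _ := by simp [hA0, mul_assoc]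
    · intro x hx i
      have h1 : u x ≤ fi i (WithLp.ofLp x) := by
        refine (chord hcomp hstep hu i hx).trans (Finset.sum_le_sum fun k _ => ?_)
        by_cases h : hpr (L k) i (WithLp.ofLp x) ∈ F k
        · rw [Set.indicator_of_mem h, Set.indicator_of_mem h, hwu _ h.1]
        · rw [Set.indicator_of_notMem h]; exact zero_le
      calc u x ≤ fi i (WithLp.ofLp x) := h1
        _ = ∫⁻ t in Set.Icc (0:ℝ) 1, fi i (WithLp.ofLp x) := by simp
        _ = ∫⁻ t, (Set.Icc (0:ℝ) 1).indicator (fun _ => fi i (WithLp.ofLp x)) t := by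
          rw [lintegral_indicator measurableSet_Icc]
        _ ≤ _ := by
          refine lintegral_mono fun t => ?_
          refine le_trans ?_ (Finset.single_le_sum (f := fun j =>
            {x : Fin (m + 1) → ℝ | x j ∈ Set.Icc (0:ℝ) 1}.indicator (fi j)
              (Function.update (WithLp.ofLp x) i t)) (fun _ _ => zero_le) (Finset.mem_univ i))
          by_cases ht : t ∈ Set.Icc (0:ℝ) 1
          · rw [Set.indicator_of_mem ht, Set.indicator_of_mem (by simpa using ht)]
            refine Finset.sum_le_sum fun k hk => ?_
            rw [hpr_update _ _ (Finset.mem_filter.1 hk).2]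
          · rw [Set.indicator_of_notMem ht]; exact zero_le
  have hμint : ∀ g : Euc (m + 1) → ℝ≥0∞, ∫⁻ x in S.P, g x ∂S.μ =
      ENNReal.ofReal c0 * ∫⁻ x in S.P, g x := by
    intro g
    rw [hμ, Measure.restrict_smul, Measure.restrict_restrict hcl.measurableSet, Set.inter_self,
      lintegral_smul_measure, smul_eq_mul]
  rcases Nat.eq_zero_or_pos m with hm | hm
  · subst hm
    refine ⟨1, one_pos, fun h => absurd h (by simp), ENNReal.ofReal c0 * (volume S.P * A0 ^ (1 + 1 : ℝ)),
      ENNReal.mul_ne_top (by simp) (ENNReal.mul_ne_top hvolP.ne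
        (ENNReal.rpow_ne_top_of_nonneg (by norm_num) hA0t)), ?_⟩
    intro u hu
    obtain ⟨f, hf, hfi, hfu⟩ := basic u hu
    rw [hμint, mul_assoc, mul_assoc]
    gcongr
    have : ∀ x ∈ S.P, u x ^ (1 + 1 : ℝ) ≤ (A0 * ∫⁻ x in frontier S.P, u x ∂S.σ) ^ (1 + 1 : ℝ) := by
      intro x hx
      refine ENNReal.rpow_le_rpow ?_ (by norm_num)
      refine ((hfu x hx 0).trans_eq ?_).trans hfi
      have h1 := lmarginal_singleton (μ := fun _ : Fin 1 => (volume : Measure ℝ)) f 0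
      have h2 := lmarginal_univ (μ := fun _ : Fin 1 => (volume : Measure ℝ)) (f := f)
      have h3 : (Finset.univ : Finset (Fin (0 + 1))) = {0} := by rfl
      rw [h3] at h2
      replace h2 := congrFun h2 (WithLp.ofLp x)
      have h4 := congrFun h1 (WithLp.ofLp x)
      exact h4.symm.trans h2
    calc _ ≤ ∫⁻ x in S.P, (A0 * ∫⁻ x in frontier S.P, u x ∂S.σ) ^ (1 + 1 : ℝ) :=
          setLIntegral_mono' hcl.measurableSet this
      _ = _ := by
        rw [setLIntegral_const, ENNReal.mul_rpow_of_nonneg _ _ (by norm_num)]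
        ring
  · have hm' : (0:ℝ) < m := by exact_mod_cast hm
    refine ⟨(m:ℝ)⁻¹, by positivity, fun _ => by push_cast; rw [add_sub_cancel_right, add_div, div_self hm'.ne', one_div],
      ENNReal.ofReal c0 * A0 ^ (1 + (m:ℝ)⁻¹),
      ENNReal.mul_ne_top (by simp) (ENNReal.rpow_ne_top_of_nonneg (by positivity) hA0t), ?_⟩
    intro u hu
    obtain ⟨f, hf, hfi, hfu⟩ := basic u hu
    rw [hμint, mul_assoc, ← ENNReal.mul_rpow_of_nonneg _ _ (by positivity)]
    gcongr
    have hgrid := lintegral_mul_prod_lintegral_pow_le (ι := Fin (m + 1)) (A := fun _ => ℝ)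
      (fun _ => (volume : Measure ℝ)) (p := (m:ℝ)⁻¹) (by positivity)
      (by simp; rw [mul_inv_cancel₀ hm'.ne']) hf
    refine le_trans ?_ (hgrid.trans (ENNReal.rpow_le_rpow hfi (by positivity)))
    have h1 : ∫⁻ x in S.P, u x ^ (1 + (m:ℝ)⁻¹) ≤ ∫⁻ x : Euc (m + 1),
        (fun y : Fin (m + 1) → ℝ => ∏ i, (∫⁻ t, f (Function.update y i t)) ^ (m:ℝ)⁻¹)
          (WithLp.ofLp x) := by
      rw [← lintegral_indicator hcl.measurableSet]
      refine lintegral_mono fun x => ?_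
      by_cases hx : x ∈ S.P
      · rw [Set.indicator_of_mem hx]
        calc u x ^ (1 + (m:ℝ)⁻¹) = ∏ i : Fin (m + 1), u x ^ (m:ℝ)⁻¹ := by
              rw [Finset.prod_const, ← ENNReal.rpow_natCast, ← ENNReal.rpow_mul]
              congr 1
              simp; field_simp
          _ ≤ _ := Finset.prod_le_prod' fun i _ => ENNReal.rpow_le_rpow (hfu x hx i) (by positivity)
      · rw [Set.indicator_of_notMem hx]; exact zero_le
    refine h1.trans_eq ?_
    have h5 := (PiLp.volume_preserving_ofLp (Fin (m + 1))).lintegral_comp_emb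
      (MeasurableEquiv.toLp 2 (Fin (m + 1) → ℝ)).symm.measurableEmbedding
      (fun y : Fin (m + 1) → ℝ => ∏ i, (∫⁻ t, f (Function.update y i t)) ^ (m:ℝ)⁻¹)
    refine Eq.trans h5 ?_
    rw [volume_pi]
    congr 1
    ext x
    have : (1:ℝ) - ((Fintype.card (Fin (m + 1)) : ℝ) - 1) * (m:ℝ)⁻¹ = 0 := by
      simp [hm'.ne']
    rw [this, ENNReal.rpow_zero, one_mul]

lemma sys_mu {n : ℕ} (S : NSystem n) : S.μ S.P ≠ 0 ∧ S.μ S.P ≠ ⊤ ∧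
    ae (S.μ.restrict S.P) = ae (volume.restrict S.P) := by
  obtain ⟨c, hc, hμ⟩ := S.flat
  have hcomp : IsCompact S.P := S.simple.1.1
  have hr : S.μ.restrict S.P = ENNReal.ofReal c • volume.restrict S.P := by
    rw [hμ, Measure.restrict_smul, Measure.restrict_restrict hcomp.isClosed.measurableSet,
      Set.inter_self]
  have hv : S.μ S.P = ENNReal.ofReal c * volume S.P := by
    rw [hμ]; simp
  have h0 : volume S.P ≠ 0 := by
    have := (isOpen_interior (s := S.P)).measure_pos volume S.simple.1.2.1
    exact (this.trans_le (measure_mono interior_subset)).ne'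
  refine ⟨?_, ?_, ?_⟩
  · rw [hv]; simp [hc, h0]
  · rw [hv]; exact ENNReal.mul_ne_top (by simp) hcomp.measure_lt_top.ne
  · rw [hr]; exact Measure.ae_ennreal_smul_measure_eq (by simp [hc]) _

lemma mem_MExp {n : ℕ} (S : NSystem n) (u : Euc n → ℝ≥0∞) :
    u ∈ MExp S 1 ↔ LC S.P u ∧ ∫⁻ x in S.P, u x ∂S.μ = S.μ S.P := by
  constructor
  · rintro ⟨h1, h2, h3, h4, _⟩
    exact ⟨⟨h1, h2, h3⟩, h4⟩
  · rintro ⟨⟨h1, h2, h3⟩, h4⟩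
    refine ⟨h1, h2, h3, h4, ?_⟩
    simp only [ENNReal.rpow_one]
    rw [h4]
    exact (sys_mu S).2.1.lt_top

lemma MExp_sub {n : ℕ} (S : NSystem n) (u : Euc n → ℝ≥0∞) {p : ℝ} (h : u ∈ MExp S p) :
    u ∈ MExp S 1 := (mem_MExp S u).2 ⟨⟨h.1, h.2.1, h.2.2.1⟩, h.2.2.2.1⟩

lemma bound_basic {n : ℕ} (S : NSystem n) : S.σ (frontier S.P) < ⊤ ∧
    ∃ r : ℝ, 0 < r ∧ (2 ≤ n → (n : ℝ) / ((n : ℝ) - 1) = 1 + r) ∧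
    ∀ B : ℝ≥0∞, B ≠ ⊤ → ∃ C : ℝ≥0∞, C ≠ ⊤ ∧ ∀ u ∈ MExp S 1,
      ∫⁻ x in frontier S.P, u x ∂S.σ ≤ B → ∫⁻ x in S.P, u x ^ (1 + r) ∂S.μ ≤ C := by
  rcases n with _ | m
  · have hP : S.P = Set.univ := by
      obtain ⟨q, hq⟩ := S.simple.1.2.1
      ext x
      simpa [Subsingleton.elim x q] using interior_subset hq
    refine ⟨by rw [hP]; simp, 1, one_pos, fun h => absurd h (by simp), ?_⟩
    intro B _
    refine ⟨S.μ S.P, (sys_mu S).2.1, ?_⟩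
    intro u hu _
    have h1 := hu.2.2.2.1
    have hc : ∀ x, u x = u 0 := fun x => by rw [Subsingleton.elim x 0]
    have h2 : u 0 = 1 := by
      simp only [hc] at h1
      rw [setLIntegral_const] at h1
      have h3 : u 0 * S.μ S.P = 1 * S.μ S.P := by rw [h1, one_mul]
      exact (ENNReal.mul_left_inj (sys_mu S).1 (sys_mu S).2.1).1 h3
    simp [hc, h2]
  · obtain ⟨h1, r, hr, hr', A, hA, h2⟩ := key_est S
    refine ⟨h1, r, hr, fun h => hr' (by omega), ?_⟩
    intro B hB
    refine ⟨A * B ^ (1 + r), ENNReal.mul_ne_top hA (ENNReal.rpow_ne_top_of_nonneg (by linarith) hB),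
      ?_⟩
    intro u hu hub
    refine (h2 u ((mem_MExp S u).1 hu).1).trans ?_
    gcongr

lemma phi_le {r : ℝ} (hr : 0 < r) {x : ℝ} (hx : 0 ≤ x) : phi x ≤ r⁻¹ * x ^ (1 + r) + 1 := by
  have h1 := Real.log_le_rpow_div hx hr
  have h2 : x * Real.log x ≤ x * (x ^ r / r) := mul_le_mul_of_nonneg_left h1 hx
  have h3 : x ^ (1 + r) = x * x ^ r := by
    rw [Real.rpow_add_of_nonneg hx zero_le_one hr.le, Real.rpow_one]
  unfold phi
  rw [h3]
  have : x * (x ^ r / r) = r⁻¹ * (x * x ^ r) := by ring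
  linarith

/-- relative entropy functional of the system -/
def EE {n : ℕ} (S : NSystem n) (u : Euc n → ℝ≥0∞) : ℝ≥0∞ :=
  (S.μ S.P)⁻¹ * HH (S.μ.restrict S.P) u

lemma HH_le {n : ℕ} {ν : Measure (Euc n)} {u : Euc n → ℝ≥0∞} {r : ℝ} (hr : 0 < r)
    (hfin : ∀ᵐ x ∂ν, u x ≠ ⊤) :
    HH ν u ≤ ENNReal.ofReal r⁻¹ * ∫⁻ x, u x ^ (1 + r) ∂ν + ν Set.univ := by
  unfold HH
  calc _ ≤ ∫⁻ x, (ENNReal.ofReal r⁻¹ * u x ^ (1 + r) + 1) ∂ν := by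
        refine lintegral_mono_ae ?_
        filter_upwards [hfin] with x hx
        have h1 := phi_le hr (x := (u x).toReal) ENNReal.toReal_nonneg
        refine (ENNReal.ofReal_le_ofReal h1).trans_eq ?_
        rw [ENNReal.ofReal_add (by positivity) zero_le_one, ENNReal.ofReal_mul (by positivity),
          ENNReal.toReal_rpow, ENNReal.ofReal_toReal
            (ENNReal.rpow_ne_top_of_nonneg (by linarith) hx), ENNReal.ofReal_one]
    _ = _ := by
      rw [lintegral_add_right _ measurable_const, lintegral_const_mul' _ _ (by simp)]
      simp

lemma M_meas {n : ℕ} {S : NSystem n} {u : Euc n → ℝ≥0∞} (hu : u ∈ MExp S 1) :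
    AEMeasurable u (S.μ.restrict S.P) :=
  have hcl := S.simple.1.1.isClosed
  lsc_aemeasurable hcl hu.1 measurable_id (ae_restrict_mem hcl.measurableSet)

lemma M_fin {n : ℕ} {S : NSystem n} {u : Euc n → ℝ≥0∞} (hu : u ∈ MExp S 1) :
    ∀ᵐ x ∂(S.μ.restrict S.P), u x ≠ ⊤ := by
  filter_upwards [ae_lt_top' (M_meas hu) (hu.2.2.2.1.trans_ne (sys_mu S).2.1)] with x hx
  exact hx.ne

lemma entropy_eq {n : ℕ} {S : NSystem n} {u : Euc n → ℝ≥0∞} (hu : u ∈ MExp S 1) :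
    Spf S u = -((EE S u : ℝ≥0∞) : EReal) := by
  obtain ⟨ha0, hat, -⟩ := sys_mu S
  have hm := (M_meas hu).ennreal_toReal
  have hxm : AEMeasurable (fun x => xlogx (u x)) (S.μ.restrict S.P) := by
    unfold xlogx
    exact hm.mul (Real.measurable_log.comp_aemeasurable hm)
  set Ep := ∫⁻ x in S.P, ENNReal.ofReal (xlogx (u x)) ∂S.μ with hEp
  set En := ∫⁻ x in S.P, ENNReal.ofReal (-(xlogx (u x))) ∂S.μ with hEn
  set H := HH (S.μ.restrict S.P) u with hH
  have hEnt : En ≠ ⊤ := by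
    refine ne_top_of_le_ne_top hat ?_
    calc En ≤ ∫⁻ x in S.P, 1 ∂S.μ := by
          refine lintegral_mono fun x => ?_
          have h1 := phi_nonneg (a := (u x).toReal) ENNReal.toReal_nonneg
          have h2 : 0 ≤ (u x).toReal := ENNReal.toReal_nonneg
          rw [← ENNReal.ofReal_one]
          apply ENNReal.ofReal_le_ofReal
          unfold xlogx
          unfold phi at h1
          linarith
      _ = _ := by simp
  have hsum : H + En + S.μ S.P = Ep + S.μ S.P := by
    calc H + En + S.μ S.P = ∫⁻ x in S.P, (ENNReal.ofReal (phi (u x).toReal) +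
          ENNReal.ofReal (-(xlogx (u x))) + u x) ∂S.μ := by
          rw [lintegral_add_right' _ (M_meas hu), lintegral_add_right' _
            (show AEMeasurable (fun x => ENNReal.ofReal (-(xlogx (u x)))) _ from
              hxm.neg.ennreal_ofReal), hu.2.2.2.1]
          rfl
      _ = ∫⁻ x in S.P, (ENNReal.ofReal (xlogx (u x)) + 1) ∂S.μ := by
          refine lintegral_congr_ae ?_
          filter_upwards [M_fin hu] with x hx
          have h1 := phi_nonneg (a := (u x).toReal) ENNReal.toReal_nonneg
          have h2 : 0 ≤ (u x).toReal := ENNReal.toReal_nonneg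
          have h3 : phi (u x).toReal = xlogx (u x) - (u x).toReal + 1 := rfl
          have h4 : u x = ENNReal.ofReal (u x).toReal := (ENNReal.ofReal_toReal hx).symm
          rw [← ENNReal.ofReal_one]
          refine (congrArg (fun z => ENNReal.ofReal (phi (u x).toReal) +
            ENNReal.ofReal (-(xlogx (u x))) + z) h4).trans ?_
          rcases le_total 0 (xlogx (u x)) with h | h
          · rw [ENNReal.ofReal_of_nonpos (p := -xlogx (u x)) (by linarith), add_zero,
              ← ENNReal.ofReal_add h1 h2, ← ENNReal.ofReal_add h zero_le_one]
            congr 1; linarith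
          · rw [ENNReal.ofReal_of_nonpos (p := xlogx (u x)) h, zero_add,
              ← ENNReal.ofReal_add h1 (neg_nonneg.2 h),
              ← ENNReal.ofReal_add (add_nonneg h1 (neg_nonneg.2 h)) h2]
            congr 1; linarith
      _ = _ := by
          rw [lintegral_add_right _ measurable_const, ← hEp]
          simp
  have hE : Ep = H + En := ((ENNReal.add_left_inj hat).1 hsum).symm
  unfold Spf EE
  rw [← hEp, ← hEn, ← hH, hE]
  clear_value Ep En H
  generalize S.μ S.P = a at *
  lift a to ℝ≥0 using hat
  lift En to ℝ≥0 using hEnt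
  have ha : 0 < (a:ℝ) := by
    have : a ≠ 0 := by simpa using ha0
    positivity
  by_cases hHt : H = ⊤
  · subst hHt
    rw [top_add, ENNReal.mul_top (by simp)]
    simp only [EReal.coe_ennreal_top, ENNReal.coe_toReal]
    rw [sub_eq_add_neg, EReal.neg_top, EReal.add_bot, EReal.coe_mul_bot_of_pos (inv_pos.2 ha)]
  · lift H to ℝ≥0 using hHt
    rw [← ENNReal.coe_inv (by simpa using ha0)]
    simp only [← ENNReal.coe_mul, ← ENNReal.coe_add, ENNReal.coe_toReal]
    simp only [EReal.coe_nnreal_eq_coe_real]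
    norm_cast
    push_cast
    ring

lemma free_eq {n : ℕ} {S : NSystem n} {u : Euc n → ℝ≥0∞} (hu : u ∈ MExp S 1) {T : ℝ} (hT : 0 < T) :
    Fpf S T u = ((Upf S u + ENNReal.ofReal T * EE S u : ℝ≥0∞) : EReal) := by
  unfold Fpf
  rw [entropy_eq hu]
  generalize EE S u = e
  generalize Upf S u = U
  by_cases he : e = ⊤
  · subst he
    rw [ENNReal.mul_top (by simp [hT])]
    simp
  · lift e to ℝ≥0 using he
    rw [if_neg (by simp), EReal.coe_ennreal_add, EReal.coe_ennreal_mul,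
      EReal.coe_ennreal_ofReal, max_eq_left hT.le, mul_neg, sub_eq_add_neg, neg_neg]

lemma liminf_comb {c d : ℝ≥0∞} (hc : c ≠ ⊤) (hd : d ≠ ⊤) {a b g : ℕ → ℝ≥0∞} {m : ℝ≥0∞}
    (h : ∀ k, c * a k + d * b k ≤ g k) (hg : Tendsto g atTop (𝓝 m)) :
    c * liminf a atTop + d * liminf b atTop ≤ m := by
  have key : ∀ a : ℕ → ℝ≥0∞, Tendsto (fun n => ⨅ i ≥ n, a i) atTop (𝓝 (liminf a atTop)) := by
    intro a
    rw [liminf_eq_iSup_iInf_of_nat]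
    refine tendsto_atTop_iSup fun p q hpq => ?_
    exact le_iInf₂ fun i hi => iInf₂_le i (le_trans hpq hi)
  refine le_of_tendsto_of_tendsto' ((ENNReal.Tendsto.const_mul (key a) (Or.inr hc)).add
    (ENNReal.Tendsto.const_mul (key b) (Or.inr hd))) hg fun k => ?_
  refine le_trans ?_ (h k)
  gcongr
  · exact iInf₂_le k le_rfl
  · exact iInf₂_le k le_rfl

lemma eps_tendsto (m : ℝ≥0∞) :
    Tendsto (fun k : ℕ => m + ((k : ℝ≥0∞) + 1)⁻¹) atTop (𝓝 m) := by
  have h : Tendsto (fun k : ℕ => ((k : ℝ≥0∞) + 1)⁻¹) atTop (𝓝 0) := by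
    have := (tendsto_add_atTop_iff_nat 1).2 ENNReal.tendsto_inv_nat_nhds_zero
    simpa using this
  simpa using tendsto_const_nhds.add h

lemma M_meas_bdry {n : ℕ} {S : NSystem n} {u : Euc n → ℝ≥0∞} (hu : u ∈ MExp S 1) :
    AEMeasurable u (S.σ.restrict (frontier S.P)) := by
  have hcl := S.simple.1.1.isClosed
  refine lsc_aemeasurable hcl hu.1 measurable_id ?_
  filter_upwards [ae_restrict_mem isClosed_frontier.measurableSet] with x hx
  exact hcl.frontier_subset hx

lemma M_mid {n : ℕ} {S : NSystem n} {u v : Euc n → ℝ≥0∞} (hu : u ∈ MExp S 1) (hv : v ∈ MExp S 1) :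
    (fun x => 2⁻¹ * (u x + v x)) ∈ MExp S 1 := by
  rw [mem_MExp] at *
  refine ⟨hu.1.mid hv.1, ?_⟩
  rw [lintegral_const_mul' _ _ (by simp), lintegral_add_left' (M_meas ((mem_MExp S u).2 hu)),
    hu.2, hv.2, ← two_mul, ← mul_assoc, ENNReal.inv_mul_cancel (by simp) (by simp), one_mul]

lemma U_mid {n : ℕ} {S : NSystem n} {u v : Euc n → ℝ≥0∞} (hu : u ∈ MExp S 1) (_hv : v ∈ MExp S 1) :
    Upf S (fun x => 2⁻¹ * (u x + v x)) = 2⁻¹ * (Upf S u + Upf S v) := by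
  unfold Upf
  rw [lintegral_const_mul' _ _ (by simp), lintegral_add_left' (M_meas_bdry hu)]
  ring

lemma E_mid {n : ℕ} {S : NSystem n} {u v : Euc n → ℝ≥0∞} (hu : u ∈ MExp S 1) (hv : v ∈ MExp S 1) :
    EE S (fun x => 2⁻¹ * (u x + v x)) + (S.μ S.P)⁻¹ * (4⁻¹ * DD (S.μ.restrict S.P) u v) ≤
      2⁻¹ * (EE S u + EE S v) := by
  unfold EE
  have := HH_mid (M_meas hu) (M_meas hv) (M_fin hu) (M_fin hv)
  calc _ = (S.μ S.P)⁻¹ * (HH (S.μ.restrict S.P) (fun x => 2⁻¹ * (u x + v x)) +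
        4⁻¹ * DD (S.μ.restrict S.P) u v) := by ring
    _ ≤ _ := mul_le_mul_right this _
    _ = _ := by ring

lemma uniq {n : ℕ} {S : NSystem n} {u v : Euc n → ℝ≥0∞} (hu : u ∈ MExp S 1) (hv : v ∈ MExp S 1)
    (hD : DD (S.μ.restrict S.P) u v = 0) : Set.EqOn u v S.P := by
  have hae := (sys_mu S).2.2
  have hfin := M_fin hu
  have hfin' := M_fin hv
  have mD : AEMeasurable (fun x => ENNReal.ofReal ((√(u x).toReal - √(v x).toReal) ^ 2))
      (S.μ.restrict S.P) :=
    (((M_meas hu).ennreal_toReal.sqrt.sub (M_meas hv).ennreal_toReal.sqrt).pow_const 2).ennreal_ofReal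
  have heq : ∀ᵐ x ∂(S.μ.restrict S.P), u x = v x := by
    unfold DD at hD
    rw [lintegral_eq_zero_iff' mD] at hD
    filter_upwards [hD, hfin, hfin'] with x h1 h2 h3
    have h4 : (√(u x).toReal - √(v x).toReal) ^ 2 ≤ 0 := ENNReal.ofReal_eq_zero.1 h1
    have h5 : √(u x).toReal - √(v x).toReal = 0 := by
      have := le_antisymm h4 (sq_nonneg _)
      exact pow_eq_zero_iff (by norm_num) |>.1 this
    have h6 : (u x).toReal = (v x).toReal :=
      (Real.sqrt_inj ENNReal.toReal_nonneg ENNReal.toReal_nonneg).1 (sub_eq_zero.1 h5)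
    exact (ENNReal.toReal_eq_toReal_iff' h2 h3).1 h6
  have h1 : ∀ᵐ x ∂(volume.restrict S.P), u x ≠ ⊤ := by
    rw [Filter.Eventually, ← hae]; exact hfin
  have h2 : u =ᵐ[volume.restrict S.P] v := by
    rw [Filter.EventuallyEq, Filter.Eventually, ← hae]; exact heq
  exact LC.eqOn (polytope_convex S.simple.1) S.simple.1.2.1 ((mem_MExp S u).1 hu).1
    ((mem_MExp S v).1 hv).1 h1 h2

lemma one_mem {n : ℕ} (S : NSystem n) : (fun _ => 1) ∈ MExp S 1 ∧ Upf S (fun _ => 1) ≠ ⊤ ∧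
    EE S (fun _ => 1) = 0 := by
  refine ⟨(mem_MExp S _).2 ⟨⟨?_, ?_, ?_⟩, ?_⟩, ?_, ?_⟩
  · exact lowerSemicontinuousOn_const
  · simp
  · intro x _ y _ t _ _
    simp
  · simp
  · unfold Upf
    refine ENNReal.mul_ne_top (by simpa using (sys_mu S).1) ?_
    simpa using (bound_basic S).1.ne
  · simp [EE, HH, phi]

lemma int_le {n : ℕ} {S : NSystem n} {u : Euc n → ℝ≥0∞} {B : ℝ≥0∞} (h : Upf S u ≤ B) :
    ∫⁻ x in frontier S.P, u x ∂S.σ ≤ S.μ S.P * B := by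
  obtain ⟨h0, ht, _⟩ := sys_mu S
  unfold Upf at h
  calc _ = S.μ S.P * ((S.μ S.P)⁻¹ * ∫⁻ x in frontier S.P, u x ∂S.σ) := by
        rw [← mul_assoc, ENNReal.mul_inv_cancel h0 ht, one_mul]
    _ ≤ _ := by gcongr

lemma mem_conj {n : ℕ} {S : NSystem n} {u : Euc n → ℝ≥0∞} (hu : u ∈ MExp S 1)
    (hU : Upf S u ≠ ⊤) : u ∈ MExp S ((n : ℝ) / ((n : ℝ) - 1)) := by
  obtain ⟨h0, ht, _⟩ := sys_mu S
  refine ⟨hu.1, hu.2.1, hu.2.2.1, hu.2.2.2.1, ?_⟩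
  by_cases hn : 2 ≤ n
  · obtain ⟨_, r, hr, hr', hb⟩ := bound_basic S
    obtain ⟨C, hC, h⟩ := hb _ (ENNReal.mul_ne_top ht hU)
    rw [hr' hn]
    exact (h u hu (int_le le_rfl)).trans_lt hC.lt_top
  · have : (n : ℝ) / ((n : ℝ) - 1) = 0 := by
      have : n = 0 ∨ n = 1 := by omega
      rcases this with h | h <;> simp [h]
    rw [this]
    simpa using ht.lt_top

lemma E_bound {n : ℕ} (S : NSystem n) {B : ℝ≥0∞} (hB : B ≠ ⊤) : ∃ C : ℝ≥0∞, C ≠ ⊤ ∧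
    ∀ u ∈ MExp S 1, Upf S u ≤ B → HH (S.μ.restrict S.P) u ≤ C := by
  obtain ⟨h0, ht, _⟩ := sys_mu S
  obtain ⟨_, r, hr, hr', hb⟩ := bound_basic S
  obtain ⟨C, hC, h⟩ := hb _ (ENNReal.mul_ne_top ht hB)
  refine ⟨ENNReal.ofReal r⁻¹ * C + S.μ S.P, ENNReal.add_ne_top.2
    ⟨ENNReal.mul_ne_top (by simp) hC, ht⟩, fun u hu hU => ?_⟩
  refine (HH_le hr (M_fin hu)).trans ?_
  rw [Measure.restrict_apply_univ]
  gcongr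
  exact h u hu (int_le hU)

/-- The core lemma for a system. -/
lemma core_sys {n : ℕ} (S : NSystem n) (K : ℕ → Set (Euc n → ℝ≥0∞)) (hanti : Antitone K)
    (hM : ∀ k, ∀ u ∈ K k, u ∈ MExp S 1)
    (hmid : ∀ k, ∀ u ∈ K k, ∀ v ∈ K k, (fun x => 2⁻¹ * (u x + v x)) ∈ K k)
    {C : ℝ≥0∞} (hC : C ≠ ⊤) (hCK : ∀ k, ∃ u ∈ K k, HH (S.μ.restrict S.P) u ≤ C) :
    ∃ (u : Euc n → ℝ≥0∞) (w : ℕ → Euc n → ℝ≥0∞), u ∈ MExp S 1 ∧ (∀ k, w k ∈ K k) ∧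
      ∫⁻ x in frontier S.P, u x ∂S.σ ≤
        liminf (fun k => ∫⁻ x in frontier S.P, w k x ∂S.σ) atTop ∧
      HH (S.μ.restrict S.P) u ≤ liminf (fun k => HH (S.μ.restrict S.P) (w k)) atTop ∧
      liminf (fun k => HH (S.μ.restrict S.P) (w k)) atTop ≤
        ⨆ k, ⨅ v ∈ K k, HH (S.μ.restrict S.P) v := by
  obtain ⟨h0, ht, hae⟩ := sys_mu S
  have hcl := S.simple.1.1.isClosed
  haveI : IsFiniteMeasure (S.σ.restrict (frontier S.P)) := ⟨by simpa using (bound_basic S).1⟩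
  haveI : IsFiniteMeasure (S.μ.restrict S.P) := ⟨by simpa using ht.lt_top⟩
  have hτ : ∀ᵐ x ∂(S.σ.restrict (frontier S.P)), x ∈ S.P := by
    filter_upwards [ae_restrict_mem isClosed_frontier.measurableSet] with x hx
    exact hcl.frontier_subset hx
  have hν0 : S.μ.restrict S.P ≠ 0 := by
    intro h
    apply h0
    rw [← Measure.restrict_apply_univ, h]; simp
  obtain ⟨u, w, h1, h2, h3, h4⟩ := core_lemma (polytope_convex S.simple.1) hcl S.simple.1.2.1 hτ hν0
    hae K hanti (fun k u hu => by
      have := (mem_MExp S u).1 (hM k u hu)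
      exact ⟨this.1, by rw [Measure.restrict_apply_univ]; exact this.2⟩) hmid hC hCK
  rw [Measure.restrict_apply_univ] at h2
  exact ⟨u, w, (mem_MExp S u).2 ⟨h1, h2⟩, h3, h4⟩

def Fe {n : ℕ} (S : NSystem n) (t : ℝ≥0∞) (u : Euc n → ℝ≥0∞) : ℝ≥0∞ := Upf S u + t * EE S u

lemma Fe_mid {n : ℕ} {S : NSystem n} (t : ℝ≥0∞) {u v : Euc n → ℝ≥0∞} (hu : u ∈ MExp S 1)
    (hv : v ∈ MExp S 1) :
    Fe S t (fun x => 2⁻¹ * (u x + v x)) +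
      t * ((S.μ S.P)⁻¹ * (4⁻¹ * DD (S.μ.restrict S.P) u v)) ≤ 2⁻¹ * (Fe S t u + Fe S t v) := by
  unfold Fe
  rw [U_mid hu hv, add_assoc, ← mul_add]
  calc _ ≤ 2⁻¹ * (Upf S u + Upf S v) + t * (2⁻¹ * (EE S u + EE S v)) := by
        gcongr
        exact E_mid hu hv
    _ = _ := by ring

lemma half_le {a b c : ℝ≥0∞} (ha : a ≤ c) (hb : b ≤ c) : 2⁻¹ * (a + b) ≤ c := by
  calc 2⁻¹ * (a + b) ≤ 2⁻¹ * (c + c) := by gcongr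
    _ = c := by
      rw [← two_mul, ← mul_assoc, ENNReal.inv_mul_cancel (by simp) (by simp), one_mul]

lemma exists_min {n : ℕ} (S : NSystem n) {t : ℝ≥0∞} (ht : t ≠ ⊤) :
    ∃ u ∈ MExp S 1, (∀ v ∈ MExp S 1, Fe S t u ≤ Fe S t v) ∧ Fe S t u ≠ ⊤ ∧
      ∀ v ∈ MExp S 1, (∀ w ∈ MExp S 1, Fe S t v ≤ Fe S t w) → EE S u ≤ EE S v := by
  obtain ⟨h0, hP, _⟩ := sys_mu S
  set m : ℝ≥0∞ := ⨅ u ∈ MExp S 1, Fe S t u with hm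
  have hle : ∀ v ∈ MExp S 1, m ≤ Fe S t v := fun v hv => iInf₂_le v hv
  have hmt : m ≠ ⊤ := by
    obtain ⟨h1, h2, h3⟩ := one_mem S
    refine ne_top_of_le_ne_top ?_ (hle _ h1)
    simpa [Fe, h3] using h2
  let K : ℕ → Set (Euc n → ℝ≥0∞) :=
    fun k => {v | v ∈ MExp S 1 ∧ Fe S t v ≤ m + ((k : ℝ≥0∞) + 1)⁻¹}
  have hanti : Antitone K := by
    intro i j hij v hv
    refine ⟨hv.1, hv.2.trans ?_⟩
    gcongr
  obtain ⟨C, hC, hb⟩ := E_bound S (B := m + 1) (by simp [hmt])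
  have hne : ∀ k, ∃ u ∈ K k, HH (S.μ.restrict S.P) u ≤ C := by
    intro k
    have hlt : m < m + ((k : ℝ≥0∞) + 1)⁻¹ := ENNReal.lt_add_right hmt (by simp)
    have hlt' := hlt
    nth_rewrite 1 [hm] at hlt'
    simp only [iInf_lt_iff] at hlt'
    obtain ⟨v, hv, hv'⟩ := hlt'
    refine ⟨v, ⟨hv, hv'.le⟩, hb v hv ?_⟩
    calc Upf S v ≤ Fe S t v := le_self_add
      _ ≤ _ := hv'.le
      _ ≤ m + 1 := by
        gcongr
        rw [ENNReal.inv_le_one]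
        exact le_add_self
  obtain ⟨u, w, hu, hw, hI, hH, hS⟩ := core_sys S K hanti (fun k u hu => hu.1)
    (fun k u hu v hv => ⟨M_mid hu.1 hv.1,
      (le_self_add.trans (Fe_mid t hu.1 hv.1)).trans (half_le hu.2 hv.2)⟩) hC hne
  have hum : Fe S t u ≤ m := by
    have hc : (S.μ S.P)⁻¹ ≠ ⊤ := by simpa using h0
    have := liminf_comb hc (ENNReal.mul_ne_top ht hc)
      (a := fun k => ∫⁻ x in frontier S.P, w k x ∂S.σ)
      (b := fun k => HH (S.μ.restrict S.P) (w k)) (fun k => by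
        have := (hw k).2
        unfold Fe Upf EE at this
        rwa [← mul_assoc] at this) (eps_tendsto m)
    refine le_trans ?_ this
    unfold Fe Upf EE
    rw [← mul_assoc]
    gcongr
  refine ⟨u, hu, fun v hv => hum.trans (hle v hv), ne_top_of_le_ne_top hmt hum, fun v hv hvm => ?_⟩
  unfold EE
  gcongr
  refine (hH.trans hS).trans (iSup_le fun k => iInf₂_le v ⟨hv, ?_⟩)
  exact (hvm u hu).trans (hum.trans le_self_add)

lemma DD_zero {n : ℕ} {S : NSystem n} {u v : Euc n → ℝ≥0∞} {t a : ℝ≥0∞} (ht : t ≠ 0) (ha : a ≠ ⊤)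
    (h : a + t * ((S.μ S.P)⁻¹ * (4⁻¹ * DD (S.μ.restrict S.P) u v)) ≤ a) :
    DD (S.μ.restrict S.P) u v = 0 := by
  have hP := (sys_mu S).2.1
  have h1 : a + t * ((S.μ S.P)⁻¹ * (4⁻¹ * DD (S.μ.restrict S.P) u v)) ≤ a + 0 := by simpa using h
  have h2 := (ENNReal.add_le_add_iff_left ha).1 h1
  simp only [nonpos_iff_eq_zero, mul_eq_zero, ht, false_or, ENNReal.inv_eq_zero, hP] at h2
  simpa using h2


/-- Uniqueness of minimizers: for `T > 0` the minimizer of `F_𝒫(T,·)` on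
`ℳ^{exp,1}(P)` exists, lies in `ℳ^{exp,n/(n−1)}(P)` and is unique (on `P`); for
`T = 0` there is a unique `u ∈ ℳ^{exp,n/(n−1)}(P)` minimizing `U_𝒫` whose entropy
equals the supremum of `S_𝒫` over all minimizers of `U_𝒫`. -/
theorem uniqueness_of_minimizers (n : ℕ) (S : NSystem n) :
    (∀ T : ℝ, 0 < T →
      ∃ u, u ∈ MExp S ((n : ℝ) / ((n : ℝ) - 1)) ∧
        (∀ u' ∈ MExp S 1, Fpf S T u ≤ Fpf S T u') ∧
        ∀ v ∈ MExp S 1, (∀ u' ∈ MExp S 1, Fpf S T v ≤ Fpf S T u') →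
          Set.EqOn v u S.P) ∧
    (∃ u, u ∈ MExp S ((n : ℝ) / ((n : ℝ) - 1)) ∧
      (∀ u' ∈ MExp S 1, Upf S u ≤ Upf S u') ∧
      Spf S u = sSup {s : EReal | ∃ u' ∈ MExp S 1,
          (∀ u'' ∈ MExp S 1, Upf S u' ≤ Upf S u'') ∧ Spf S u' = s} ∧
      ∀ v ∈ MExp S 1,
        ((∀ u' ∈ MExp S 1, Upf S v ≤ Upf S u') ∧
          Spf S v = sSup {s : EReal | ∃ u' ∈ MExp S 1,
              (∀ u'' ∈ MExp S 1, Upf S u' ≤ Upf S u'') ∧ Spf S u' = s}) →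
        Set.EqOn v u S.P) := by
  constructor
  · intro T hT
    obtain ⟨u, hu, hmin, hfin, -⟩ := exists_min S (t := ENNReal.ofReal T) (by simp)
    have hF : ∀ v ∈ MExp S 1, Fpf S T v = ((Fe S (ENNReal.ofReal T) v : ℝ≥0∞) : EReal) :=
      fun v hv => free_eq hv hT
    refine ⟨u, mem_conj hu (ne_top_of_le_ne_top hfin le_self_add), fun v hv => ?_,
      fun v hv hvm => ?_⟩
    · rw [hF u hu, hF v hv]
      exact_mod_cast hmin v hv
    · have hvu : Fe S (ENNReal.ofReal T) v ≤ Fe S (ENNReal.ofReal T) u := by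
        have := hvm u hu
        rw [hF u hu, hF v hv] at this
        exact_mod_cast this
      refine uniq hv hu (DD_zero (t := ENNReal.ofReal T) (by simpa using hT) hfin ?_)
      refine le_trans ?_ ((Fe_mid (ENNReal.ofReal T) hv hu).trans (half_le hvu le_rfl))
      gcongr
      exact hmin _ (M_mid hv hu)
  · obtain ⟨u, hu, hmin, hfin, hent⟩ := exists_min S (t := 0) (by simp)
    simp only [Fe, zero_mul, add_zero] at hmin hfin hent
    have hsup : Spf S u = sSup {s : EReal | ∃ u' ∈ MExp S 1,
          (∀ u'' ∈ MExp S 1, Upf S u' ≤ Upf S u'') ∧ Spf S u' = s} := by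
      refine le_antisymm (le_sSup ⟨u, hu, hmin, rfl⟩) (sSup_le ?_)
      rintro s ⟨v, hv, hvm, rfl⟩
      rw [entropy_eq hu, entropy_eq hv, EReal.neg_le_neg_iff]
      exact_mod_cast hent v hv hvm
    refine ⟨u, mem_conj hu hfin, hmin, hsup, ?_⟩
    rintro v hv ⟨hvm, hvs⟩
    rw [← hsup, entropy_eq hu, entropy_eq hv, neg_inj] at hvs
    have hE : EE S v = EE S u := by exact_mod_cast hvs
    have hEt : EE S u ≠ ⊤ := by
      obtain ⟨C, hC, hb⟩ := E_bound S hfin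
      exact ENNReal.mul_ne_top (by simpa using (sys_mu S).1)
        (ne_top_of_le_ne_top hC (hb u hu le_rfl))
    refine uniq hv hu (DD_zero (t := 1) one_ne_zero hEt ?_)
    rw [one_mul]
    refine le_trans ?_ ((E_mid hv hu).trans (half_le hE.le le_rfl))
    gcongr
    refine hent _ (M_mid hv hu) fun w hw => ?_
    rw [U_mid hv hu]
    exact half_le (hvm w hw) (hmin w hw)

end
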